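/- arXiv:1312.6195 — 5 statements merged into one kernel-verified Lean document; each statement's English description precedes it below -/
import Mathlib

section
/- Logarithmic potential of the equilibrium density: for every real x ≥ 0, the probability density ψ(y) = 1/(π(y+1)√y) on (0,∞) satisfies ∫_0^∞ log|x − y| ψ(y) dy = log(x+1). In particular ψ integrates to 1 over (0,∞). -/
open MeasureTheory

/-!
The substitution `y = tan² t` carries the uniform probability measure on `(0, π/2)` to the
equilibrium density. Under it, with `x = tan² a`,
`log |x - y| = log |sin (a - t)| + log |sin (a + t)| - 2 log |cos a| - 2 log |cos t|`.
As `t` runs through `(0, π/2)`, `a - t` and `a + t` together sweep out one period of `log |sin|`,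
so the first two terms have an integral independent of `a`; for `a = π/2` they add up to
`2 log |cos t|`, so they cancel the last term on average. What remains is
`-2 log |cos a| = log (x + 1)`. Since `Real.log u = log |u|`, no absolute value has to be written
around the trigonometric factors.
-/

section

open Real Set

/-- The equilibrium density `ψ(y) = 1 / (π (y + 1) √y)` of the half-line `(0, ∞)`. It is only
meant to be evaluated at `y > 0`. -/
noncomputable def equilibriumDensity (y : ℝ) : ℝ :=
  (π * (y + 1) * √y)⁻¹

theorem equilibriumDensity_smul (y c : ℝ) :
    equilibriumDensity y • c = c / (π * (y + 1) * √y) := by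
  rw [equilibriumDensity, smul_eq_mul, div_eq_inv_mul]

theorem tan_sq_add_one {t : ℝ} (ht : cos t ≠ 0) : tan t ^ 2 + 1 = (cos t ^ 2)⁻¹ := by
  rw [← inv_one_add_tan_sq ht, inv_inv, add_comm]

theorem log_tan_sq_add_one {t : ℝ} (ht : cos t ≠ 0) :
    log (tan t ^ 2 + 1) = -2 * log (cos t) := by
  rw [tan_sq_add_one ht, log_inv, log_pow, Nat.cast_ofNat, neg_mul]

theorem tan_sq_sub_tan_sq {a t : ℝ} (ha : cos a ≠ 0) (ht : cos t ≠ 0) :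
    tan a ^ 2 - tan t ^ 2 = sin (a - t) * sin (a + t) / (cos a ^ 2 * cos t ^ 2) := by
  rw [tan_eq_sin_div_cos, tan_eq_sin_div_cos, sin_sub, sin_add]
  field_simp
  ring

theorem log_abs_tan_sq_sub_tan_sq {a t : ℝ} (ha : cos a ≠ 0) (ht : cos t ≠ 0)
    (hsub : sin (a - t) ≠ 0) (hadd : sin (a + t) ≠ 0) :
    log |tan a ^ 2 - tan t ^ 2| =
      log (sin (a - t)) + log (sin (a + t)) - 2 * log (cos t) - 2 * log (cos a) := by
  rw [log_abs, tan_sq_sub_tan_sq ha ht, log_div (mul_ne_zero hsub hadd) (by positivity),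
    log_mul hsub hadd, log_mul (by positivity) (by positivity), log_pow, log_pow]
  push_cast
  ring

theorem injOn_tan_sq : InjOn (fun t ↦ tan t ^ 2) (Ioo 0 (π / 2)) := by
  intro s hs t ht hst
  have hs_pos := tan_pos_of_pos_of_lt_pi_div_two hs.1 hs.2
  have ht_pos := tan_pos_of_pos_of_lt_pi_div_two ht.1 ht.2
  have hsubset : Ioo 0 (π / 2) ⊆ Ioo (-(π / 2)) (π / 2) :=
    Ioo_subset_Ioo_left (by linarith [pi_pos])
  exact injOn_tan (hsubset hs) (hsubset ht) ((sq_eq_sq₀ hs_pos.le ht_pos.le).1 hst)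

theorem tan_arctan_sqrt_sq {x : ℝ} (hx : 0 ≤ x) : tan (arctan √x) ^ 2 = x := by
  rw [tan_arctan, sq_sqrt hx]

theorem image_tan_sq_Ioo : (fun t ↦ tan t ^ 2) '' Ioo 0 (π / 2) = Ioi 0 := by
  refine Subset.antisymm ?_ fun y hy ↦ ?_
  · rintro _ ⟨t, ht, rfl⟩
    exact pow_pos (tan_pos_of_pos_of_lt_pi_div_two ht.1 ht.2) 2
  · exact ⟨arctan √y, ⟨arctan_pos.2 (sqrt_pos.2 hy), arctan_lt_pi_div_two _⟩,
      tan_arctan_sqrt_sq (le_of_lt hy)⟩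

theorem hasDerivAt_tan_sq {t : ℝ} (ht : cos t ≠ 0) :
    HasDerivAt (fun t ↦ tan t ^ 2) (2 * tan t / cos t ^ 2) t := by
  simpa [mul_one_div] using! (hasDerivAt_tan ht).pow 2

theorem abs_deriv_tan_sq_mul_equilibriumDensity {t : ℝ} (hs : sin t ≠ 0) (hc : cos t ≠ 0) :
    |2 * tan t / cos t ^ 2| * equilibriumDensity (tan t ^ 2) = 2 / π := by
  have htan : |tan t| ≠ 0 := by
    rw [abs_ne_zero, tan_eq_sin_div_cos]
    exact div_ne_zero hs hc
  rw [equilibriumDensity, sqrt_sq_eq_abs, tan_sq_add_one hc, abs_div, abs_mul, abs_two,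
    abs_of_nonneg (sq_nonneg (cos t))]
  field_simp

theorem cos_ne_zero_of_mem_Ioo {t : ℝ} (ht : t ∈ Ioo 0 (π / 2)) : cos t ≠ 0 :=
  (cos_pos_of_mem_Ioo ⟨by linarith [ht.1, ht.2], ht.2⟩).ne'

section ChangeOfVariables

variable {E : Type*} [NormedAddCommGroup E] [NormedSpace ℝ E]

theorem abs_deriv_tan_sq_smul_equilibriumDensity_smul (f : ℝ → E) :
    EqOn (fun t ↦ |2 * tan t / cos t ^ 2| • equilibriumDensity (tan t ^ 2) • f (tan t ^ 2))
      (fun t ↦ (2 / π) • f (tan t ^ 2)) (Ioo 0 (π / 2)) := by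
  intro t ht
  have hs : sin t ≠ 0 := (sin_pos_of_pos_of_lt_pi ht.1 (by linarith [ht.2, pi_pos])).ne'
  simp only [smul_smul,
    abs_deriv_tan_sq_mul_equilibriumDensity hs (cos_ne_zero_of_mem_Ioo ht)]

theorem integrableOn_equilibriumDensity_smul_iff (f : ℝ → E) :
    IntegrableOn (fun y ↦ equilibriumDensity y • f y) (Ioi 0) ↔
      IntervalIntegrable (fun t ↦ f (tan t ^ 2)) volume 0 (π / 2) := by
  rw [← image_tan_sq_Ioo, integrableOn_image_iff_integrableOn_abs_deriv_smul measurableSet_Ioo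
      (fun t ht ↦ (hasDerivAt_tan_sq (cos_ne_zero_of_mem_Ioo ht)).hasDerivWithinAt) injOn_tan_sq,
    integrableOn_congr_fun (abs_deriv_tan_sq_smul_equilibriumDensity_smul f) measurableSet_Ioo,
    intervalIntegrable_iff_integrableOn_Ioo_of_le (by positivity)]
  exact integrable_fun_smul_iff (by positivity) _

theorem integral_equilibriumDensity_smul (f : ℝ → E) :
    ∫ y in Ioi 0, equilibriumDensity y • f y =
      (2 / π) • ∫ t in 0..π / 2, f (tan t ^ 2) := by
  rw [← image_tan_sq_Ioo, integral_image_eq_integral_abs_deriv_smul measurableSet_Ioo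
      (fun t ht ↦ (hasDerivAt_tan_sq (cos_ne_zero_of_mem_Ioo ht)).hasDerivWithinAt) injOn_tan_sq,
    setIntegral_congr_fun measurableSet_Ioo (abs_deriv_tan_sq_smul_equilibriumDensity_smul f),
    integral_smul, intervalIntegral.integral_of_le (by positivity), integral_Ioc_eq_integral_Ioo]

end ChangeOfVariables

theorem integral_equilibriumDensity : ∫ y in Ioi 0, equilibriumDensity y = 1 := by
  have h := integral_equilibriumDensity_smul fun _ ↦ (1 : ℝ)
  simp only [smul_eq_mul, mul_one, intervalIntegral.integral_const, sub_zero] at h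
  rw [h]
  field_simp

theorem ae_sin_ne_zero : ∀ᵐ t : ℝ, sin t ≠ 0 := by
  filter_upwards [(countable_range fun n : ℤ ↦ n * π).ae_notMem volume] with t ht hsin
  exact ht (sin_eq_zero_iff.1 hsin)

theorem ae_sin_sub_ne_zero (a : ℝ) : ∀ᵐ t : ℝ, sin (a - t) ≠ 0 :=
  (Measure.measurePreserving_sub_left volume a).quasiMeasurePreserving.ae ae_sin_ne_zero

theorem ae_sin_add_ne_zero (a : ℝ) : ∀ᵐ t : ℝ, sin (a + t) ≠ 0 :=
  (measurePreserving_add_left volume a).quasiMeasurePreserving.ae ae_sin_ne_zero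

theorem ae_cos_ne_zero : ∀ᵐ t : ℝ, cos t ≠ 0 := by
  simpa only [sin_pi_div_two_sub] using ae_sin_sub_ne_zero (π / 2)

theorem ae_log_abs_tan_sq_sub_tan_sq {a : ℝ} (ha : cos a ≠ 0) :
    ∀ᵐ t : ℝ, log |tan a ^ 2 - tan t ^ 2| =
      log (sin (a - t)) + log (sin (a + t)) - 2 * log (cos t) - 2 * log (cos a) := by
  filter_upwards [ae_cos_ne_zero, ae_sin_sub_ne_zero a, ae_sin_add_ne_zero a]
    with t hcos hsub hadd
  exact log_abs_tan_sq_sub_tan_sq ha hcos hsub hadd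

theorem periodic_log_sin : Function.Periodic (fun t ↦ log (sin t)) π := fun t ↦ by
  simp only [sin_add_pi, log_neg_eq_log]

theorem intervalIntegrable_log_sin_sub (a b c : ℝ) :
    IntervalIntegrable (fun t ↦ log (sin (a - t))) volume b c := by
  simpa using (intervalIntegrable_log_sin (a := a - b) (b := a - c)).comp_sub_left a

theorem intervalIntegrable_log_sin_add (a b c : ℝ) :
    IntervalIntegrable (fun t ↦ log (sin (a + t))) volume b c := by
  simpa using (intervalIntegrable_log_sin (a := a + b) (b := a + c)).comp_add_left a

theorem integral_log_sin_sub_add_log_sin_add (a : ℝ) :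
    ∫ t in 0..π / 2, (log (sin (a - t)) + log (sin (a + t))) = -log 2 * π := by
  calc ∫ t in 0..π / 2, (log (sin (a - t)) + log (sin (a + t)))
    _ = (∫ t in a - π / 2..a, log (sin t)) + ∫ t in a..a + π / 2, log (sin t) := by
      rw [intervalIntegral.integral_add (intervalIntegrable_log_sin_sub _ _ _)
          (intervalIntegrable_log_sin_add _ _ _),
        intervalIntegral.integral_comp_sub_left (fun t ↦ log (sin t)),
        intervalIntegral.integral_comp_add_left (fun t ↦ log (sin t)), sub_zero, add_zero]
    _ = ∫ t in a - π / 2..a - π / 2 + π, log (sin t) := by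
      rw [sub_add_eq_add_sub, add_sub_assoc, sub_half]
      exact intervalIntegral.integral_add_adjacent_intervals intervalIntegrable_log_sin
        intervalIntegrable_log_sin
    _ = -log 2 * π := by
      rw [periodic_log_sin.intervalIntegral_add_eq _ 0, zero_add, integral_log_sin_zero_pi]

theorem integral_two_mul_log_cos : ∫ t in 0..π / 2, 2 * log (cos t) = -log 2 * π := by
  simpa only [sin_pi_div_two_sub, add_comm (π / 2), sin_add_pi_div_two, ← two_mul] using
    integral_log_sin_sub_add_log_sin_add (π / 2)

theorem intervalIntegrable_log_abs_tan_sq_sub_tan_sq {a : ℝ} (ha : cos a ≠ 0) (b c : ℝ) :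
    IntervalIntegrable (fun t ↦ log |tan a ^ 2 - tan t ^ 2|) volume b c := by
  have hsum := (((intervalIntegrable_log_sin_sub a b c).add
    (intervalIntegrable_log_sin_add a b c)).sub
      (intervalIntegrable_log_cos.const_mul 2)).sub
        (intervalIntegrable_const (c := 2 * log (cos a)))
  refine hsum.congr_ae (ae_restrict_of_ae ?_)
  filter_upwards [ae_log_abs_tan_sq_sub_tan_sq ha] with t ht using ht.symm

theorem integral_log_abs_tan_sq_sub_tan_sq {a : ℝ} (ha : cos a ≠ 0) :
    ∫ t in 0..π / 2, log |tan a ^ 2 - tan t ^ 2| = -π * log (cos a) := by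
  have hsin : IntervalIntegrable (fun t ↦ log (sin (a - t)) + log (sin (a + t)))
      volume 0 (π / 2) :=
    (intervalIntegrable_log_sin_sub a _ _).add (intervalIntegrable_log_sin_add a _ _)
  have hcos : IntervalIntegrable (fun t ↦ 2 * log (cos t)) volume 0 (π / 2) :=
    intervalIntegrable_log_cos.const_mul 2
  rw [intervalIntegral.integral_congr_ae
      ((ae_log_abs_tan_sq_sub_tan_sq ha).mono fun _ ht _ ↦ ht),
    intervalIntegral.integral_sub (hsin.sub hcos) intervalIntegrable_const,
    intervalIntegral.integral_sub hsin hcos, integral_log_sin_sub_add_log_sin_add,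
    integral_two_mul_log_cos, intervalIntegral.integral_const, smul_eq_mul]
  ring

end

/-- Logarithmic potential of the equilibrium density: for every `x ≥ 0`, the
probability density `ψ(y) = 1/(π(y+1)√y)` on `(0,∞)` satisfies
`∫₀^∞ log|x - y| ψ(y) dy = log(x+1)`; the integrand is Lebesgue integrable on
`(0,∞)`, and `ψ` integrates to `1` over `(0,∞)`. -/
theorem equilibrium_log_potential :
    (∀ x : ℝ, 0 ≤ x →
      IntegrableOn
        (fun y : ℝ => Real.log |x - y| / (Real.pi * (y + 1) * Real.sqrt y))
        (Set.Ioi 0) volume ∧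
      ∫ y in Set.Ioi (0 : ℝ),
          Real.log |x - y| / (Real.pi * (y + 1) * Real.sqrt y) =
        Real.log (x + 1)) ∧
    ∫ y in Set.Ioi (0 : ℝ), (Real.pi * (y + 1) * Real.sqrt y)⁻¹ = 1 := by
  refine ⟨fun x hx ↦ ?_, integral_equilibriumDensity⟩
  obtain ⟨a, ha, rfl⟩ : ∃ a, Real.cos a ≠ 0 ∧ Real.tan a ^ 2 = x :=
    ⟨Real.arctan √x, (Real.cos_arctan_pos _).ne', tan_arctan_sqrt_sq hx⟩
  simp only [← equilibriumDensity_smul]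
  constructor
  · exact (integrableOn_equilibriumDensity_smul_iff _).2
      (intervalIntegrable_log_abs_tan_sq_sub_tan_sq ha _ _)
  · rw [integral_equilibriumDensity_smul fun y ↦ Real.log |Real.tan a ^ 2 - y|,
      integral_log_abs_tan_sq_sub_tan_sq ha, log_tan_sq_add_one ha, smul_eq_mul]
    field_simp
end

section
/- Obrechkoff's theorem: let p be a polynomial of degree n ≥ 1 over ℂ all of whose coefficients are real and strictly positive, and for 0 ≤ α < π let C_α = {z ∈ ℂ : z ≠ 0 and |arg z| ≤ α} be the closed cone of half-angle α around the positive real axis. Then the number of zeros of p in C_α, counted with multiplicity, is at most (2α/π)·n. In particular p has no zeros in (0,∞). -/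
open MeasureTheory ProbabilityTheory Filter Polynomial
open scoped ENNReal NNReal Classical

noncomputable section

/-- Polynomials of positive degree with all coefficients real and strictly positive. -/
def polPos (p : Polynomial ℂ) : Prop :=
  0 < p.natDegree ∧ ∀ i ≤ p.natDegree, (p.coeff i).im = 0 ∧ 0 < (p.coeff i).re

/-- Empirical measure of the zeros of a polynomial (counted with multiplicity). -/
def zeroMeasure (p : Polynomial ℂ) : Measure ℂ :=
  (p.natDegree : ℝ≥0∞)⁻¹ • (p.roots.map MeasureTheory.Measure.dirac).sum

/-- The closure of the set of empirical zero measures of polynomials with positive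
coefficients, inside the space of probability measures with the weak topology. -/
def calP : Set (ProbabilityMeasure ℂ) :=
  closure {μ : ProbabilityMeasure ℂ |
    ∃ p : Polynomial ℂ, polPos p ∧ (μ : Measure ℂ) = zeroMeasure p}

/-- The kernel f(z,w) = log|1-z| + log|1-w| - log|z-w|. -/
def fker (z w : ℂ) : ℝ :=
  Real.log ‖1 - z‖ + Real.log ‖1 - w‖
    - Real.log ‖z - w‖

/-- The double integral ∬ f dμ dμ, as an extended real number: the (Lebesgue)
integral of the positive part minus that of the negative part. -/
def doubleInt (μ : Measure ℂ) : EReal :=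
  ((∫⁻ q : ℂ × ℂ, ENNReal.ofReal (fker q.1 q.2) ∂(μ.prod μ) : ℝ≥0∞) : EReal)
    - ((∫⁻ q : ℂ × ℂ, ENNReal.ofReal (-(fker q.1 q.2)) ∂(μ.prod μ) : ℝ≥0∞) : EReal)

/-- The large deviations rate function. -/
def rateI (μ : ProbabilityMeasure ℂ) : EReal :=
  if μ ∈ calP then (2 : EReal)⁻¹ * doubleInt (μ : Measure ℂ) else ⊤

end

/-!
For a real polynomial `P` of degree `n` with nonnegative coefficients and `P 0 > 0`, the number of
zeros of `Im P` on the open ray `arg z = a` is estimated in two ways. As a polynomial in the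
modulus, `Im P` has coefficients `c_j sin (j a)`, whose signs change at most `⌊n a / π⌋` times, so
Descartes' rule allows at most `⌊n a / π⌋` zeros. On the other hand, if `P` has no zero on the ray
and `N` zeros in the cone `|arg z| ≤ a`, then a continuous argument of `P` along the ray moves from
`N π` at the origin to `n a` at infinity, and `Im P` vanishes whenever it passes a multiple of `π`.
Hence `N ≤ 2 ⌊n a / π⌋ + 1`, and the parity of `N` removes the `1`. Letting a generic `a` decrease
to `α` gives the bound for every cone.
-/

section

open Complex Set
open scoped ComplexConjugate Real Topology

theorem sign_ne_neg_sign_of_mul_nonneg {R : Type*} [Ring R] [LinearOrder R] [IsStrictOrderedRing R]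
    {u x y : R} (hu : u ≠ 0) (hx : x ≠ 0) (hux : 0 ≤ u * x) (huy : 0 ≤ u * y) :
    SignType.sign x ≠ -SignType.sign y := by
  intro hsign
  have hpos : SignType.sign (u * x) = 1 := sign_pos (hux.lt_of_ne' (mul_ne_zero hu hx))
  have hneg : SignType.sign (u * y) = -1 := by
    rw [← hpos, sign_mul, sign_mul, hsign, mul_neg, neg_neg]
  exact huy.not_gt (sign_eq_neg_one_iff.1 hneg)

theorem signVariations_le_of_monotone {R : Type*} [Ring R] [LinearOrder R] [IsStrictOrderedRing R]
    {m : ℕ → ℕ} (hm : Monotone m) {P : R[X]} (hP : ∀ j, 0 ≤ (-1) ^ m j * P.coeff j) :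
    P.signVariations ≤ m P.natDegree := by
  induction hd : P.natDegree using Nat.strong_induction_on generalizing P with
  | _ d ih =>
  subst hd
  by_cases hP0 : P = 0
  · simp [hP0]
  rw [signVariations_eq_eraseLead_add_ite hP0]
  rcases P.eraseLead_natDegree_lt_or_eraseLead_eq_zero with hlt | herase
  swap
  · simp [herase, hP0]
  have hlow : P.eraseLead.leadingCoeff = P.coeff P.eraseLead.natDegree := by
    rw [leadingCoeff, eraseLead_coeff_of_ne _ hlt.ne]
  have hind : P.eraseLead.signVariations ≤ m P.eraseLead.natDegree := by
    refine ih _ hlt (fun j => ?_) rfl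
    rw [eraseLead_coeff]
    split_ifs
    · simp
    · exact hP j
  have hle := hm hlt.le
  split_ifs with hsign
  · have hne : m P.eraseLead.natDegree ≠ m P.natDegree := by
      intro heq
      have hnext := hP P.eraseLead.natDegree
      rw [← hlow, heq] at hnext
      exact sign_ne_neg_sign_of_mul_nonneg (pow_ne_zero _ (neg_ne_zero.2 one_ne_zero))
        (leadingCoeff_ne_zero.2 hP0) (hP P.natDegree) hnext hsign
    omega
  · omega

theorem ne_zero_of_mem_aroots {R S : Type*} [CommRing R] [CommRing S] [IsDomain S] [Algebra R S]
    [FaithfulSMul R S] {P : R[X]} (hP : P.coeff 0 ≠ 0) {z : S} (hz : z ∈ P.aroots S) : z ≠ 0 := by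
  rintro rfl
  have hroot := (mem_aroots'.1 hz).2
  rw [← coeff_zero_eq_aeval_zero'] at hroot
  exact hP ((FaithfulSMul.algebraMap_eq_zero_iff R S).1 hroot)

theorem map_aroots_eq_self {k K : Type*} [Field k] [Field K] [IsAlgClosed K] [Algebra k K]
    (σ : K →ₐ[k] K) (P : k[X]) : (P.aroots K).map σ = P.aroots K := by
  have hroots := (IsAlgClosed.splits (P.map (algebraMap k K))).roots_map (σ : K →+* K)
  rw [Polynomial.map_map, σ.comp_algebraMap] at hroots
  exact hroots.symm

theorem exists_eq_X_pow_mul_coeff_zero_ne_zero {R : Type*} [CommRing R] {P : R[X]} (hP : P ≠ 0) :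
    ∃ (k : ℕ) (Q : R[X]), P = X ^ k * Q ∧ Q.coeff 0 ≠ 0 := by
  obtain ⟨Q, hPQ, hQ⟩ := exists_eq_pow_rootMultiplicity_mul_and_not_dvd P hP 0
  rw [C_0, sub_zero] at hPQ hQ
  exact ⟨_, Q, hPQ, fun h => hQ (X_dvd_iff.2 h)⟩

theorem sum_map_ite_zero {ι M : Type*} [AddCommMonoid M] (s : Multiset ι) (p : ι → Prop) (c : M) :
    (s.map fun i => if p i then c else 0).sum = s.countP p • c := by
  induction s using Multiset.induction_on with
  | empty => simp
  | cons i s ih =>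
    rw [Multiset.map_cons, Multiset.sum_cons, ih, Multiset.countP_cons]
    split_ifs
    · rw [succ_nsmul']
    · rw [zero_add, add_zero]

theorem neg_one_pow_floor_mul_sin_nonneg {x : ℝ} (hx : 0 ≤ x) :
    0 ≤ (-1 : ℝ) ^ ⌊x / π⌋₊ * Real.sin x := by
  have hfloor : ⌊x / π⌋₊ * π ≤ x := (le_div_iff₀ Real.pi_pos).1 (Nat.floor_le (by positivity))
  have hlt : x < (⌊x / π⌋₊ + 1) * π := (div_lt_iff₀ Real.pi_pos).1 (Nat.lt_floor_add_one _)
  rw [← Real.sin_sub_nat_mul_pi]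
  exact Real.sin_nonneg_of_nonneg_of_le_pi (by linarith) (by linarith)

theorem exists_mem_Ioo_notMem_sin_mul_ne_zero {S : Set ℝ} (hS : S.Countable) {x : ℝ} (hx : x ≠ 0)
    {b c : ℝ} (hbc : b < c) : ∃ a ∈ Ioo b c, a ∉ S ∧ Real.sin (x * a) ≠ 0 := by
  have hcountable : (S ∪ range fun m : ℤ => m * π / x).Countable := hS.union (countable_range _)
  obtain ⟨a, ha, hbac⟩ := (hcountable.dense_compl ℝ).exists_between hbc
  rw [compl_union] at ha
  refine ⟨a, hbac, ha.1, fun hsin => ha.2 ?_⟩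
  obtain ⟨m, hm⟩ := Real.sin_eq_zero_iff.1 hsin
  exact ⟨m, (div_eq_iff hx).2 (hm.trans (mul_comm x a))⟩

theorem prod_eq_norm_mul_exp_sum_arg (s : Multiset ℂ) :
    s.prod = ‖s.prod‖ * cexp ((s.map arg).sum * I) := by
  induction s using Multiset.induction_on with
  | empty => simp
  | cons z s ih =>
    rw [Multiset.prod_cons, Multiset.map_cons, Multiset.sum_cons, norm_mul, ofReal_mul, ofReal_add,
      add_mul, Complex.exp_add, mul_mul_mul_comm, norm_mul_exp_arg_mul_I, ← ih]

theorem arg_mul_exp_of_add_mem_Ioc {z : ℂ} (hz : z ≠ 0) {θ : ℝ} (hθ : arg z + θ ∈ Ioc (-π) π) :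
    arg (z * cexp (θ * I)) = arg z + θ := by
  have hpolar : z * cexp (θ * I) = ‖z‖ * cexp ((arg z + θ : ℝ) * I) := by
    conv_lhs => rw [← norm_mul_exp_arg_mul_I z]
    rw [mul_assoc, ← Complex.exp_add, ofReal_add, add_mul]
  rw [hpolar, arg_real_mul _ (norm_pos_iff.2 hz), Complex.exp_mul_I, arg_cos_add_sin_mul_I hθ]

theorem arg_neg_mul_exp_neg {z : ℂ} (hz : z ≠ 0) {a : ℝ} (ha : 0 ≤ a) (haπ : a ≤ π) :
    arg (-(z * cexp (-(a * I)))) = arg z - a + if arg z ≤ a then π else -π := by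
  have hlow := neg_pi_lt_arg z
  have hhigh := arg_le_pi z
  split_ifs with hza
  · have hrot : -(z * cexp (-(a * I))) = z * cexp ((π - a : ℝ) * I) := by
      rw [ofReal_sub, sub_mul, sub_eq_add_neg, Complex.exp_add, exp_pi_mul_I]
      ring
    rw [hrot, arg_mul_exp_of_add_mem_Ioc hz ⟨by linarith, by linarith⟩]
    ring
  · have hrot : -(z * cexp (-(a * I))) = z * cexp ((-π - a : ℝ) * I) := by
      rw [ofReal_sub, sub_mul, sub_eq_add_neg, Complex.exp_add, ofReal_neg, neg_mul,
        exp_neg_pi_mul_I]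
      ring
    rw [hrot, arg_mul_exp_of_add_mem_Ioc hz ⟨by linarith, by linarith⟩]
    ring

theorem arg_neg_mul_exp_neg_add_conj {z : ℂ} (hz : z ≠ 0) {a : ℝ} (ha : 0 ≤ a) (haπ : a < π) :
    arg (-(z * cexp (-(a * I)))) + arg (-(conj z * cexp (-(a * I)))) =
      -(2 * a) + if |arg z| ≤ a then 2 * π else 0 := by
  rw [arg_neg_mul_exp_neg hz ha haπ.le,
    arg_neg_mul_exp_neg ((_root_.map_ne_zero conj).2 hz) ha haπ.le, arg_conj]
  have := abs_le (a := arg z) (b := a)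
  have := Real.pi_pos
  split_ifs <;> grind

theorem neg_mul_exp_neg_mem_slitPlane {z : ℂ} (hz : z ≠ 0) {a : ℝ} (ha : 0 ≤ a) (haπ : a < π)
    (hza : arg z ≠ a) : -(z * cexp (-(a * I))) ∈ slitPlane := by
  rw [mem_slitPlane_iff_arg, arg_neg_mul_exp_neg hz ha haπ.le]
  refine ⟨?_, neg_ne_zero.2 (mul_ne_zero hz (Complex.exp_ne_zero _))⟩
  have := arg_le_pi z
  split_ifs <;> grind

theorem ofReal_add_mem_slitPlane {w : ℂ} (hw : w ∈ slitPlane) {r : ℝ} (hr : 0 ≤ r) :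
    r + w ∈ slitPlane := by
  rw [mem_slitPlane_iff] at hw ⊢
  rw [add_re, add_im, ofReal_re, ofReal_im, zero_add]
  exact hw.imp_left fun h => by linarith

theorem tendsto_arg_sub_atTop (w : ℂ) :
    Tendsto (fun r : ℝ => arg (r - w)) atTop (𝓝 0) := by
  have hlim : Tendsto (fun r : ℝ => 1 - (r : ℂ)⁻¹ * w) atTop (𝓝 1) := by
    have hinv := tendsto_inv₀_cobounded.comp (RCLike.tendsto_ofReal_atTop_cobounded ℂ)
    simpa using (hinv.mul_const w).const_sub 1
  have harg := (continuousAt_arg one_mem_slitPlane).tendsto.comp hlim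
  rw [arg_one] at harg
  refine harg.congr' ?_
  filter_upwards [eventually_gt_atTop 0] with r hr
  have hrne : (r : ℂ) ≠ 0 := ofReal_ne_zero.2 hr.ne'
  rw [Function.comp_apply, ← arg_real_mul _ hr, mul_sub, mul_one, mul_inv_cancel_left₀ hrne]

/-- The imaginary part of `P` along the ray `arg z = a`, as a polynomial in the modulus. -/
noncomputable def rayIm (P : ℝ[X]) (a : ℝ) : ℝ[X] :=
  P.sum fun j c => monomial j (c * Real.sin (j * a))

theorem coeff_rayIm (P : ℝ[X]) (a : ℝ) (j : ℕ) :
    (rayIm P a).coeff j = P.coeff j * Real.sin (j * a) := by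
  rw [rayIm, sum_def, finsetSum_coeff]
  simp only [coeff_monomial, Finset.sum_ite_eq', mem_support_iff, ite_not]
  split_ifs with hj
  · rw [hj, zero_mul]
  · rfl

theorem natDegree_rayIm_le (P : ℝ[X]) (a : ℝ) : (rayIm P a).natDegree ≤ P.natDegree := by
  rw [natDegree_le_iff_coeff_eq_zero]
  intro j hj
  rw [coeff_rayIm, coeff_eq_zero_of_natDegree_lt hj, zero_mul]

theorem rayIm_ne_zero {P : ℝ[X]} (hP : P ≠ 0) {a : ℝ} (ha : Real.sin (P.natDegree * a) ≠ 0) :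
    rayIm P a ≠ 0 := by
  intro hzero
  have hcoeff := coeff_rayIm P a P.natDegree
  rw [hzero, coeff_zero, zero_eq_mul] at hcoeff
  exact hcoeff.elim (leadingCoeff_ne_zero.2 hP) ha

theorem eval_rayIm (P : ℝ[X]) (a r : ℝ) :
    (rayIm P a).eval r = (aeval (r * cexp (a * I)) P).im := by
  rw [rayIm, Polynomial.sum, eval_finsetSum, aeval_def, eval₂_eq_sum, Polynomial.sum,
    Complex.im_sum]
  refine Finset.sum_congr rfl fun j _ => ?_
  have hpow : cexp (a * I) ^ j = cexp ((j * a : ℝ) * I) := by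
    rw [← Complex.exp_nat_mul, ofReal_mul, ofReal_natCast, mul_assoc]
  rw [eval_monomial, mul_pow, hpow, ← ofReal_pow, coe_algebraMap, im_ofReal_mul, im_ofReal_mul,
    exp_ofReal_mul_I_im]
  ring

theorem signVariations_rayIm_le {P : ℝ[X]} (hP : ∀ j, 0 ≤ P.coeff j) {a : ℝ} (ha : 0 ≤ a) :
    (rayIm P a).signVariations ≤ ⌊P.natDegree * a / π⌋₊ := by
  have hmono : Monotone fun j : ℕ => ⌊j * a / π⌋₊ := by
    intro i j hij
    dsimp only
    gcongr
  refine (signVariations_le_of_monotone hmono fun j => ?_).trans (hmono (natDegree_rayIm_le P a))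
  rw [coeff_rayIm, mul_left_comm]
  exact mul_nonneg (hP j) (neg_one_pow_floor_mul_sin_nonneg (by positivity))

/-- A choice of the argument of `P (r * exp (i a))`, for `P` with nonnegative leading coefficient.
It is assembled from the linear factors of `P` turned by the angle `-a`, so as to be continuous in
`r ≥ 0` when `P` has no zero on the ray `arg z = a`. -/
noncomputable def rayPhase (P : ℝ[X]) (a r : ℝ) : ℝ :=
  P.natDegree * a + ((P.aroots ℂ).map fun z => arg (r - z * cexp (-(a * I)))).sum

theorem aeval_eq_norm_mul_exp_rayPhase {P : ℝ[X]} (hP : 0 ≤ P.leadingCoeff) (a r : ℝ) :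
    aeval (r * cexp (a * I)) P =
      ‖aeval (r * cexp (a * I)) P‖ * cexp (rayPhase P a r * I) := by
  set W := (P.aroots ℂ).map fun z => r - z * cexp (-(a * I)) with hW
  have hrot (z : ℂ) : r * cexp (a * I) - z = cexp (a * I) * (r - z * cexp (-(a * I))) := by
    rw [mul_sub, mul_left_comm, ← Complex.exp_add, add_neg_cancel, Complex.exp_zero, mul_one,
      mul_comm]
  have hfactor : aeval (r * cexp (a * I)) P =
      P.leadingCoeff * (cexp ((P.natDegree * a : ℝ) * I) * W.prod) := by
    rw [(IsAlgClosed.splits _).aeval_eq_prod_aroots, coe_algebraMap]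
    simp_rw [hrot]
    rw [Multiset.prod_map_mul, Multiset.map_const', Multiset.prod_replicate,
      IsAlgClosed.card_aroots_eq_natDegree, ← Complex.exp_nat_mul, ofReal_mul, ofReal_natCast,
      mul_assoc]
  have hphase : rayPhase P a r = P.natDegree * a + (W.map arg).sum := by
    rw [rayPhase, hW, Multiset.map_map]
    rfl
  have hnorm : ‖aeval (r * cexp (a * I)) P‖ = P.leadingCoeff * ‖W.prod‖ := by
    rw [hfactor, norm_mul, norm_mul, norm_exp_ofReal_mul_I, one_mul, norm_real,
      Real.norm_of_nonneg hP]
  rw [hnorm, hfactor, prod_eq_norm_mul_exp_sum_arg W, hphase, ofReal_add, add_mul, Complex.exp_add]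
  simp only [ofReal_mul, norm_mul, norm_exp_ofReal_mul_I, norm_real, norm_norm, mul_one]
  ring

theorem eval_rayIm_eq_norm_mul_sin {P : ℝ[X]} (hP : 0 ≤ P.leadingCoeff) (a r : ℝ) :
    (rayIm P a).eval r = ‖aeval (r * cexp (a * I)) P‖ * Real.sin (rayPhase P a r) := by
  rw [eval_rayIm]
  conv_lhs => rw [aeval_eq_norm_mul_exp_rayPhase hP]
  rw [im_ofReal_mul, exp_ofReal_mul_I_im]

theorem tendsto_rayPhase_atTop (P : ℝ[X]) (a : ℝ) :
    Tendsto (rayPhase P a) atTop (𝓝 (P.natDegree * a)) := by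
  have hsum := tendsto_multiset_sum (P.aroots ℂ)
    fun z _ => tendsto_arg_sub_atTop (z * cexp (-(a * I)))
  have hlim := hsum.const_add (P.natDegree * a : ℝ)
  rw [Multiset.map_const', Multiset.sum_replicate, smul_zero, add_zero] at hlim
  exact hlim

theorem continuousOn_rayPhase {P : ℝ[X]} {a : ℝ} (ha : 0 ≤ a) (haπ : a < π)
    (hP : ∀ z ∈ P.aroots ℂ, z ≠ 0 ∧ arg z ≠ a) : ContinuousOn (rayPhase P a) (Ici 0) := by
  refine continuousOn_const.add (continuousOn_multiset_sum _ fun z hz r hr => ?_)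
  have hslit : (r : ℂ) - z * cexp (-(a * I)) ∈ slitPlane :=
    ofReal_add_mem_slitPlane
      (neg_mul_exp_neg_mem_slitPlane (hP z hz).1 ha haπ (hP z hz).2) hr
  exact ((continuousAt_arg hslit).comp
    (f := fun r : ℝ => (r : ℂ) - z * cexp (-(a * I))) (by fun_prop)).continuousWithinAt

theorem exists_pos_rayPhase_eq {P : ℝ[X]} {a : ℝ} (hcont : ContinuousOn (rayPhase P a) (Ici 0))
    {y : ℝ} (hy : y ∈ Ioo (P.natDegree * a) (rayPhase P a 0)) :
    ∃ r > 0, rayPhase P a r = y := by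
  have hrange : Ioc (P.natDegree * a) (rayPhase P a 0) ⊆ rayPhase P a '' Ici 0 :=
    isPreconnected_Ici.intermediate_value_Ioc self_mem_Ici (le_principal_iff.2 (Ici_mem_atTop 0))
      hcont (tendsto_rayPhase_atTop P a)
  obtain ⟨r, hr, hry⟩ := hrange (Ioo_subset_Ioc_self hy)
  refine ⟨r, lt_of_le_of_ne hr ?_, hry⟩
  rintro rfl
  exact hy.2.ne' hry

theorem rayPhase_zero {P : ℝ[X]} (hP : P.coeff 0 ≠ 0) {a : ℝ} (ha : 0 ≤ a) (haπ : a < π) :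
    rayPhase P a 0 = (P.aroots ℂ).countP (fun z => |arg z| ≤ a) * π := by
  set f : ℂ → ℝ := fun z => arg (-(z * cexp (-(a * I)))) with hf
  have hphase : rayPhase P a 0 = P.natDegree * a + ((P.aroots ℂ).map f).sum := by
    simp only [rayPhase, hf, ofReal_zero, zero_sub]
  have hconj : ((P.aroots ℂ).map f).sum = ((P.aroots ℂ).map fun z => f (conj z)).sum := by
    conv_lhs => rw [← map_aroots_eq_self conjAe.toAlgHom P, Multiset.map_map]
    rfl
  have hpairs : ((P.aroots ℂ).map fun z => f z + f (conj z)).sum =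
      P.natDegree * -(2 * a) + (P.aroots ℂ).countP (fun z => |arg z| ≤ a) * (2 * π) := by
    rw [Multiset.map_congr rfl fun z hz =>
      arg_neg_mul_exp_neg_add_conj (ne_zero_of_mem_aroots hP hz) ha haπ, Multiset.sum_map_add,
      Multiset.map_const', Multiset.sum_replicate, IsAlgClosed.card_aroots_eq_natDegree,
      nsmul_eq_mul, sum_map_ite_zero, nsmul_eq_mul]
  rw [Multiset.sum_map_add, ← hconj] at hpairs
  linarith

theorem even_countP_abs_arg_le {P : ℝ[X]} (hlead : 0 ≤ P.leadingCoeff) (hP : 0 < P.coeff 0)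
    {a : ℝ} (ha : 0 ≤ a) (haπ : a < π) : Even ((P.aroots ℂ).countP fun z => |arg z| ≤ a) := by
  -- At `r = 0` the polar form reads `P 0 = P 0 * (-1) ^ N`.
  have hpolar := aeval_eq_norm_mul_exp_rayPhase hlead a 0
  rw [ofReal_zero, zero_mul, ← coeff_zero_eq_aeval_zero', coe_algebraMap, norm_real,
    Real.norm_of_nonneg hP.le, rayPhase_zero hP.ne' ha haπ, ofReal_mul, ofReal_natCast, mul_assoc,
    Complex.exp_nat_mul, exp_pi_mul_I] at hpolar
  have hsign := mul_left_cancel₀ (ofReal_ne_zero.2 hP.ne') ((mul_one _).trans hpolar)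
  exact (neg_one_pow_eq_one_iff_even (by norm_num)).1 hsign.symm

theorem countP_le_card_pos_roots_rayIm {P : ℝ[X]} (hlead : 0 ≤ P.leadingCoeff)
    (hP : P.coeff 0 ≠ 0) {a : ℝ} (ha : 0 ≤ a) (haπ : a < π)
    (harg : ∀ z ∈ P.aroots ℂ, arg z ≠ a) (hray : rayIm P a ≠ 0) :
    (P.aroots ℂ).countP (fun z => |arg z| ≤ a) ≤
      (rayIm P a).roots.countP (0 < ·) + ⌊P.natDegree * a / π⌋₊ + 1 := by
  set N := (P.aroots ℂ).countP fun z => |arg z| ≤ a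
  set F := ⌊P.natDegree * a / π⌋₊
  have hcont : ContinuousOn (rayPhase P a) (Ici 0) :=
    continuousOn_rayPhase ha haπ fun z hz => ⟨ne_zero_of_mem_aroots hP hz, harg z hz⟩
  have hsurj : SurjOn (fun r => ⌊rayPhase P a r / π⌋₊)
      (((rayIm P a).roots.filter (0 < ·)).toFinset : Set ℝ) (Finset.Ioo F N : Set ℕ) := by
    intro j hj
    obtain ⟨hFj, hjN⟩ := Finset.mem_Ioo.1 hj
    have hlow : P.natDegree * a < j * π := (div_lt_iff₀ Real.pi_pos).1 (Nat.lt_of_floor_lt hFj)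
    have hhigh : j * π < rayPhase P a 0 := by
      rw [rayPhase_zero hP ha haπ]
      gcongr
    obtain ⟨r, hr, hphase⟩ := exists_pos_rayPhase_eq hcont ⟨hlow, hhigh⟩
    have hroot : (rayIm P a).IsRoot r := by
      rw [IsRoot, eval_rayIm_eq_norm_mul_sin hlead, hphase, Real.sin_nat_mul_pi, mul_zero]
    refine ⟨r, ?_, ?_⟩
    · rw [Finset.mem_coe, Multiset.mem_toFinset, Multiset.mem_filter, mem_roots hray]
      exact ⟨hroot, hr⟩
    · dsimp only
      rw [hphase, mul_div_cancel_right₀ _ Real.pi_ne_zero, Nat.floor_natCast]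
  have hcard := (Finset.card_le_card_of_surjOn _ hsurj).trans (Multiset.toFinset_card_le _)
  rw [Nat.card_Ioo, ← Multiset.countP_eq_card_filter] at hcard
  omega

theorem countP_abs_arg_le_two_mul_floor {P : ℝ[X]} (hP : ∀ j, 0 ≤ P.coeff j) (hP0 : P.coeff 0 ≠ 0)
    {a : ℝ} (ha : 0 ≤ a) (haπ : a < π) (harg : ∀ z ∈ P.aroots ℂ, arg z ≠ a)
    (hray : rayIm P a ≠ 0) :
    (P.aroots ℂ).countP (fun z => |arg z| ≤ a) ≤ 2 * ⌊P.natDegree * a / π⌋₊ := by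
  have hdescartes : (rayIm P a).roots.countP (0 < ·) ≤ (rayIm P a).signVariations := by
    convert roots_countP_pos_le_signVariations (rayIm P a)
  have hvar := signVariations_rayIm_le hP ha
  have hcount := countP_le_card_pos_roots_rayIm (hP _) hP0 ha haπ harg hray
  obtain ⟨m, hm⟩ := even_countP_abs_arg_le (hP _) ((hP 0).lt_of_ne' hP0) ha haπ
  omega

theorem countP_abs_arg_le_of_lt {P : ℝ[X]} (hP : ∀ j, 0 ≤ P.coeff j) (hP0 : P.coeff 0 ≠ 0)
    {α β : ℝ} (hα : 0 ≤ α) (hαβ : α < β) (hβπ : β ≤ π) :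
    ((P.aroots ℂ).countP (fun z => |arg z| ≤ α) : ℝ) ≤ 2 * β / π * P.natDegree := by
  rcases eq_or_ne P.natDegree 0 with hn | hn
  · have hnone : P.aroots ℂ = 0 :=
      Multiset.card_eq_zero.1 (IsAlgClosed.card_aroots_eq_natDegree.trans hn)
    rw [hnone, hn, Multiset.countP_zero, Nat.cast_zero, mul_zero]
  obtain ⟨a, ⟨hαa, haβ⟩, harg, hsin⟩ := exists_mem_Ioo_notMem_sin_mul_ne_zero
    ((P.aroots ℂ).toFinset.countable_toSet.image arg) (Nat.cast_ne_zero.2 hn) hαβ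
  have hmono : (P.aroots ℂ).countP (fun z => |arg z| ≤ α) ≤
      (P.aroots ℂ).countP (fun z => |arg z| ≤ a) := by
    rw [Multiset.countP_eq_card_filter, Multiset.countP_eq_card_filter]
    exact Multiset.card_le_card (Multiset.monotone_filter_right _ fun z hz => hz.trans hαa.le)
  have ha : 0 ≤ a := hα.trans hαa.le
  have hgeneric := countP_abs_arg_le_two_mul_floor hP hP0 ha (haβ.trans_le hβπ)
    (fun z hz hza => harg ⟨z, Multiset.mem_toFinset.2 hz, hza⟩)
    (rayIm_ne_zero (by rintro rfl; exact hP0 rfl) hsin)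
  calc ((P.aroots ℂ).countP (fun z => |arg z| ≤ α) : ℝ)
      ≤ 2 * ⌊P.natDegree * a / π⌋₊ := mod_cast hmono.trans hgeneric
    _ ≤ 2 * (P.natDegree * a / π) := by gcongr; exact Nat.floor_le (by positivity)
    _ = 2 * a / π * P.natDegree := by ring
    _ ≤ 2 * β / π * P.natDegree := by gcongr

theorem countP_abs_arg_le {P : ℝ[X]} (hP : ∀ j, 0 ≤ P.coeff j) (hP0 : P.coeff 0 ≠ 0)
    {α : ℝ} (hα : 0 ≤ α) :
    ((P.aroots ℂ).countP (fun z => |arg z| ≤ α) : ℝ) ≤ 2 * α / π * P.natDegree := by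
  rcases lt_or_ge α π with hαπ | hαπ
  · have hlim : Tendsto (fun β : ℝ => 2 * β / π * P.natDegree) (𝓝[>] α)
        (𝓝 (2 * α / π * P.natDegree)) :=
      (Continuous.tendsto (by fun_prop) α).mono_left nhdsWithin_le_nhds
    refine ge_of_tendsto hlim ?_
    filter_upwards [Ioo_mem_nhdsGT hαπ] with β hβ
    exact countP_abs_arg_le_of_lt hP hP0 hα hβ.1 hβ.2.le
  · have htwo : 1 ≤ 2 * α / π := (one_le_div Real.pi_pos).2 (by linarith)
    calc ((P.aroots ℂ).countP (fun z => |arg z| ≤ α) : ℝ)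
        ≤ P.natDegree := mod_cast (Multiset.countP_le_card _ _).trans_eq
          IsAlgClosed.card_aroots_eq_natDegree
      _ ≤ 2 * α / π * P.natDegree := le_mul_of_one_le_left (Nat.cast_nonneg _) htwo

theorem card_filter_aroots_le {P : ℝ[X]} (hP : P ≠ 0) (hcoeff : ∀ j, 0 ≤ P.coeff j)
    {α : ℝ} (hα : 0 ≤ α) :
    (((P.aroots ℂ).filter fun z => z ≠ 0 ∧ |arg z| ≤ α).card : ℝ) ≤
      2 * α / π * P.natDegree := by
  obtain ⟨k, Q, rfl, hQ⟩ := exists_eq_X_pow_mul_coeff_zero_ne_zero hP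
  have hQcoeff (j : ℕ) : 0 ≤ Q.coeff j := coeff_X_pow_mul Q k j ▸ hcoeff (j + k)
  have hX : ((aroots (X ^ k : ℝ[X]) ℂ).filter fun z => z ≠ 0 ∧ |arg z| ≤ α) = 0 := by
    rw [aroots_X_pow, Multiset.filter_nsmul, Multiset.filter_singleton]
    simp
  have hroots : ((Q.aroots ℂ).filter fun z => z ≠ 0 ∧ |arg z| ≤ α) =
      (Q.aroots ℂ).filter fun z => |arg z| ≤ α :=
    Multiset.filter_congr fun z hz => and_iff_right (ne_zero_of_mem_aroots hQ hz)
  rw [aroots_mul hP, Multiset.filter_add, hX, zero_add, hroots, ← Multiset.countP_eq_card_filter]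
  have hdeg : Q.natDegree ≤ (X ^ k * Q).natDegree := natDegree_le_of_dvd (dvd_mul_left _ _) hP
  refine (countP_abs_arg_le hQcoeff hQ hα).trans ?_
  gcongr

theorem obrechkoff_general {P : ℝ[X]} (hP : P ≠ 0) (hcoeff : ∀ j, 0 ≤ P.coeff j)
    {α : ℝ} (hα : 0 ≤ α) :
    (((P.aroots ℂ).filter fun z => z ≠ 0 ∧ |arg z| ≤ α).card : ℝ) ≤
        2 * α / π * P.natDegree ∧
      ∀ x : ℝ, 0 < x → aeval (x : ℂ) P ≠ 0 := by
  refine ⟨card_filter_aroots_le hP hcoeff hα, fun x hx hroot => ?_⟩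
  have hnone := card_filter_aroots_le hP hcoeff le_rfl
  rw [mul_zero, zero_div, zero_mul, Nat.cast_nonpos, Multiset.card_eq_zero,
    Multiset.filter_eq_nil] at hnone
  refine hnone x (mem_aroots.2 ⟨hP, hroot⟩) ⟨ofReal_ne_zero.2 hx.ne', ?_⟩
  rw [arg_ofReal_of_nonneg hx.le, abs_zero]

theorem polPos.exists_map_algebraMap_eq {p : ℂ[X]} (hp : polPos p) :
    ∃ P : ℝ[X], P ≠ 0 ∧ (∀ j, 0 ≤ P.coeff j) ∧ P.map (algebraMap ℝ ℂ) = p := by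
  have hreal : ∀ j, p.coeff j ∈ range (algebraMap ℝ ℂ) ∧ 0 ≤ (p.coeff j).re := by
    intro j
    rcases le_or_gt j p.natDegree with hj | hj
    · obtain ⟨him, hre⟩ := hp.2 j hj
      exact ⟨⟨(p.coeff j).re, Complex.ext rfl him.symm⟩, hre.le⟩
    · rw [coeff_eq_zero_of_natDegree_lt hj]
      exact ⟨⟨0, map_zero _⟩, le_rfl⟩
  obtain ⟨P, rfl⟩ := (mem_lifts p).1 ((lifts_iff_coeff_lifts p).2 fun j => (hreal j).1)
  refine ⟨P, ?_, fun j => ?_, rfl⟩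
  · rintro rfl
    exact hp.1.ne' (by rw [Polynomial.map_zero, natDegree_zero])
  · simpa only [coeff_map, coe_algebraMap, ofReal_re] using (hreal j).2

end

/-- Obrechkoff's theorem: if `p` is a polynomial of degree `n ≥ 1` over `ℂ` all of
whose coefficients are real and strictly positive, then for `0 ≤ α < π`, the number
of zeros of `p` (with multiplicity) in the closed cone
`C_α = {z ≠ 0 : |arg z| ≤ α}` is at most `(2α/π)·n`; in particular `p` has no zeros
in `(0,∞)`. -/
theorem obrechkoff (p : Polynomial ℂ) (hp : polPos p)
    (α : ℝ) (hα0 : 0 ≤ α) (hαπ : α < Real.pi) :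
    ((Multiset.card
        (p.roots.filter (fun z => z ≠ 0 ∧ |Complex.arg z| ≤ α)) : ℝ) ≤
      2 * α / Real.pi * p.natDegree) ∧
    ∀ x : ℝ, 0 < x → p.eval (x : ℂ) ≠ 0 := by
  obtain ⟨P, hP, hcoeff, rfl⟩ := hp.exists_map_algebraMap_eq
  simpa only [natDegree_map, eval_map_algebraMap] using obrechkoff_general hP hcoeff hα0
end

section
/- The rate function I is well defined and lower semicontinuous: for every μ ∈ 𝒫 the function f(z,w) = log|1−z| + log|1−w| − log|z−w| has a well-defined integral in (−∞,∞] with respect to μ⊗μ, uniformly bounded below over 𝒫, and the function I : M_1(ℂ) → (−∞,∞] is lower semicontinuous with respect to weak convergence. -/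
open MeasureTheory ProbabilityTheory Filter Polynomial
open scoped ENNReal NNReal Classical

/-!
If `p` has positive coefficients then `|p| ≤ p(1) (1 + r) ^ deg p` on the circle of radius `r`
about `1`, so Jensen's formula there gives `∫ log⁺ (r / |1 - z|) dμ ≤ log (1 + r)` for the zero
measure `μ` of `p`, and by lower semicontinuity for every `μ` in the closure `calP`. Replacing
`|1 - z|` and `|1 - w|` by `max |1 - z| r` and `max |1 - w| r` in the kernel makes it lower
semicontinuous and bounded below, so its double integral is lower semicontinuous in `μ`; on `calP`
it exceeds the double integral of the original kernel by at most `2 log (1 + r)`. As `r → 0` the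
latter is therefore a uniform limit of lower semicontinuous functions.
-/

section LowerSemicontinuity

open Set Topology

theorem lintegral_eq_lintegral_meas_ofReal_lt {α : Type*} [MeasurableSpace α] (μ : Measure α)
    [SFinite μ] {f : α → ℝ≥0∞} (hf : Measurable f) :
    ∫⁻ a, f a ∂μ = ∫⁻ t in Ioi (0 : ℝ), μ {a | ENNReal.ofReal t < f a} := by
  have volume_eq (y : ℝ≥0∞) : volume {t : ℝ | 0 < t ∧ ENNReal.ofReal t < y} = y := by
    induction y with
    | top =>
      simp only [ENNReal.ofReal_lt_top, and_true]
      exact Real.volume_Ioi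
    | coe y =>
      have : {t : ℝ | 0 < t ∧ ENNReal.ofReal t < y} = Ioo 0 (y : ℝ) := by
        ext t
        exact and_congr_right fun ht => ENNReal.ofReal_lt_coe_iff ht.le
      rw [this, Real.volume_Ioo, sub_zero, ENNReal.ofReal_coe_nnreal]
  have hmeas : MeasurableSet {x : ℝ × α | 0 < x.1 ∧ ENNReal.ofReal x.1 < f x.2} :=
    (measurableSet_lt measurable_const measurable_fst).inter
      (measurableSet_lt measurable_fst.ennreal_ofReal (hf.comp measurable_snd))
  calc ∫⁻ a, f a ∂μ
      = ∫⁻ a, volume {t : ℝ | 0 < t ∧ ENNReal.ofReal t < f a} ∂μ := by simp_rw [volume_eq]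
    _ = (volume.prod μ) {x : ℝ × α | 0 < x.1 ∧ ENNReal.ofReal x.1 < f x.2} :=
        (Measure.prod_apply_symm hmeas).symm
    _ = ∫⁻ t : ℝ, μ {a | 0 < t ∧ ENNReal.ofReal t < f a} := Measure.prod_apply hmeas
    _ = ∫⁻ t in Ioi (0 : ℝ), μ {a | ENNReal.ofReal t < f a} := by
        rw [← lintegral_indicator measurableSet_Ioi]
        refine lintegral_congr fun t => ?_
        by_cases ht : 0 < t <;> simp [ht]

theorem lowerSemicontinuous_lintegral {Ω : Type*} [MeasurableSpace Ω] [TopologicalSpace Ω]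
    [TopologicalSpace.PseudoMetrizableSpace Ω] [TopologicalSpace.SeparableSpace Ω] [BorelSpace Ω]
    {f : Ω → ℝ≥0∞} (hf : LowerSemicontinuous f) :
    LowerSemicontinuous fun ν : ProbabilityMeasure Ω => ∫⁻ x, f x ∂(ν : Measure Ω) := by
  refine lowerSemicontinuous_iff_le_liminf.2 fun μ => ?_
  simp_rw [fun ν : ProbabilityMeasure Ω =>
    lintegral_eq_lintegral_meas_ofReal_lt (ν : Measure Ω) hf.measurable]
  have hanti (ν : ProbabilityMeasure Ω) :
      Antitone fun t : ℝ => (ν : Measure Ω) {a | ENNReal.ofReal t < f a} := fun s t hst =>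
    measure_mono fun _ ha => (ENNReal.ofReal_le_ofReal hst).trans_lt ha
  calc ∫⁻ t in Ioi (0 : ℝ), (μ : Measure Ω) {a | ENNReal.ofReal t < f a}
      ≤ ∫⁻ t in Ioi (0 : ℝ),
          (𝓝 μ).liminf fun ν : ProbabilityMeasure Ω =>
            (ν : Measure Ω) {a | ENNReal.ofReal t < f a} :=
        lintegral_mono fun t =>
          ProbabilityMeasure.le_liminf_measure_open_of_tendsto tendsto_id (hf.isOpen_preimage _)
    _ ≤ _ := lintegral_liminf_le fun ν => (hanti ν).measurable

theorem lowerSemicontinuousOn_of_forall_exists_le_le_add {X : Type*} [TopologicalSpace X]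
    {F : X → EReal} {S : Set X}
    (h : ∀ ε : ℝ, 0 < ε → ∃ g : X → EReal, LowerSemicontinuousOn g S ∧
      ∀ x ∈ S, F x ≤ g x ∧ g x ≤ F x + ε) :
    LowerSemicontinuousOn F S := by
  intro x hx y hy
  obtain ⟨a, hya, haF⟩ := EReal.lt_iff_exists_real_btwn.1 hy
  obtain ⟨b, hab, hbF⟩ := EReal.lt_iff_exists_real_btwn.1 haF
  have hε : 0 < b - a := sub_pos.2 (EReal.coe_lt_coe_iff.1 hab)
  obtain ⟨g, hg, hFg⟩ := h (b - a) hε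
  filter_upwards [hg x hx b (hbF.trans_le (hFg x hx).1), self_mem_nhdsWithin] with x' hbg hx'
  by_contra! hle
  refine (hbg.trans_le (hFg x' hx').2).not_ge ?_
  calc F x' + ↑(b - a) ≤ a + ↑(b - a) := by gcongr; exact hle.trans hya.le
    _ = b := by norm_cast; ring

theorem lowerSemicontinuous_ite_top {X : Type*} [TopologicalSpace X] {f : X → EReal}
    {S : Set X} (hf : LowerSemicontinuousOn f S) (hS : IsClosed S) :
    LowerSemicontinuous fun x => if x ∈ S then f x else ⊤ := by
  intro x y hy
  by_cases hx : x ∈ S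
  · simp only [if_pos hx] at hy
    filter_upwards [eventually_nhdsWithin_iff.1 (hf x hx y hy)] with x' hx'
    split_ifs with hS'
    · exact hx' hS'
    · exact hy.trans_le le_top
  · simp only [if_neg hx] at hy
    filter_upwards [hS.isOpen_compl.mem_nhds hx] with x' hx'
    simpa only [if_neg hx'] using hy

theorem lowerSemicontinuousOn_ereal_const_mul {X : Type*} [TopologicalSpace X] {f : X → EReal}
    {S : Set X} (hf : LowerSemicontinuousOn f S) {a : EReal} (ha : 0 ≤ a) (ha' : a ≠ ⊤) :
    LowerSemicontinuousOn (fun x => a * f x) S := by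
  have hbot : a ≠ ⊥ := (EReal.bot_lt_zero.trans_le ha).ne'
  have hcont : Continuous fun y : EReal => a * y :=
    continuous_iff_continuousAt.2 fun y =>
      EReal.Tendsto.const_mul tendsto_id (.inl hbot) (.inl ha')
  exact hcont.comp_lowerSemicontinuousOn hf fun _ _ h => mul_le_mul_of_nonneg_left h ha

theorem lowerSemicontinuous_neg_log : LowerSemicontinuous fun x : ℝ => -Real.log x := by
  intro x y hy
  rcases eq_or_ne x 0 with rfl | hx
  · -- The junk value `log 0 = 0` is harmless here: `-log |x|` is nonnegative near `0`.
    filter_upwards [Ioo_mem_nhds neg_one_lt_zero zero_lt_one] with x hx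
    simp only [Real.log_zero, neg_zero] at hy
    have := Real.log_nonpos (abs_nonneg x) (abs_lt.2 hx).le
    rw [Real.log_abs] at this
    exact hy.trans_le (neg_nonneg.2 this)
  · exact (Real.continuousAt_log hx).neg.lowerSemicontinuousAt y hy

end LowerSemicontinuity

section ExtendedIntegral

open Set

variable {Ω : Type*} [MeasurableSpace Ω] {μ : Measure Ω}

/-- The integral of a real function as an extended real number: the integral of the positive part
minus that of the negative part. It is meaningful as soon as one of the two is finite. -/
noncomputable def eintegral (μ : Measure Ω) (f : Ω → ℝ) : EReal :=
  ((∫⁻ x, ENNReal.ofReal (f x) ∂μ : ℝ≥0∞) : EReal)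
    - ((∫⁻ x, ENNReal.ofReal (-f x) ∂μ : ℝ≥0∞) : EReal)

theorem eintegral_congr_ae {f g : Ω → ℝ} (hfg : f =ᵐ[μ] g) : eintegral μ f = eintegral μ g := by
  have hpos : ∫⁻ x, ENNReal.ofReal (f x) ∂μ = ∫⁻ x, ENNReal.ofReal (g x) ∂μ :=
    lintegral_congr_ae (hfg.fun_comp ENNReal.ofReal)
  have hneg : ∫⁻ x, ENNReal.ofReal (-f x) ∂μ = ∫⁻ x, ENNReal.ofReal (-g x) ∂μ :=
    lintegral_congr_ae (hfg.fun_comp fun y => ENNReal.ofReal (-y))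
  rw [eintegral, eintegral, hpos, hneg]

theorem lintegral_ofReal_neg_lt_top_of_integrable_le {f h : Ω → ℝ} (hh : Integrable h μ)
    (hhf : h ≤ᵐ[μ] f) : ∫⁻ x, ENNReal.ofReal (-f x) ∂μ < ⊤ :=
  (lintegral_mono_ae (hhf.mono fun _ hx => ENNReal.ofReal_le_ofReal (neg_le_neg hx))).trans_lt
    hh.neg.lintegral_lt_top

theorem ofReal_add_ofReal_neg_eq {a b : ℝ} (hba : b ≤ a) :
    ENNReal.ofReal a + ENNReal.ofReal (-b)
      = ENNReal.ofReal (a - b) + ENNReal.ofReal b + ENNReal.ofReal (-a) := by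
  rw [← ENNReal.toReal_eq_toReal_iff' (by finiteness) (by finiteness)]
  simp only [ENNReal.toReal_add, ENNReal.toReal_ofReal', ENNReal.ofReal_ne_top, ne_eq,
    ENNReal.add_eq_top, or_self, not_false_eq_true]
  grind

theorem lintegral_ofReal_add_lintegral_ofReal_neg {f h : Ω → ℝ} (hf : AEMeasurable f μ)
    (hh : AEMeasurable h μ) (hhf : h ≤ᵐ[μ] f) :
    ∫⁻ x, ENNReal.ofReal (f x) ∂μ + ∫⁻ x, ENNReal.ofReal (-h x) ∂μ
      = ∫⁻ x, ENNReal.ofReal (f x - h x) ∂μ + ∫⁻ x, ENNReal.ofReal (h x) ∂μ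
        + ∫⁻ x, ENNReal.ofReal (-f x) ∂μ := by
  rw [← lintegral_add_left' (by fun_prop), ← lintegral_add_left' (by fun_prop),
    ← lintegral_add_left' (by fun_prop)]
  exact lintegral_congr_ae (hhf.mono fun x hx => ofReal_add_ofReal_neg_eq hx)

theorem coe_sub_coe_eq_coe_add_of_add_eq {a b c d e : ℝ≥0∞} (hb : b ≠ ⊤) (hd : d ≠ ⊤)
    (he : e ≠ ⊤) (h : a + e = c + d + b) :
    (a : EReal) - b = c + (d.toReal - e.toReal : ℝ) := by
  lift b to ℝ≥0 using hb
  lift d to ℝ≥0 using hd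
  lift e to ℝ≥0 using he
  induction a with
  | top =>
    obtain rfl : c = ⊤ := by simpa using h.symm
    rfl
  | coe a =>
    lift c to ℝ≥0 using by rintro rfl; simp [← ENNReal.coe_add] at h
    have hreal : (a : ℝ) + e = c + d + b := by exact_mod_cast h
    change ((a : ℝ) : EReal) - (b : ℝ) = (c : ℝ) + ((d - e : ℝ) : EReal)
    norm_cast
    linarith

theorem eintegral_eq_lintegral_sub_add {f h : Ω → ℝ} (hf : AEMeasurable f μ)
    (hh : Integrable h μ) (hhf : h ≤ᵐ[μ] f) :
    eintegral μ f
      = ((∫⁻ x, ENNReal.ofReal (f x - h x) ∂μ : ℝ≥0∞) : EReal) + (∫ x, h x ∂μ : ℝ) := by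
  rw [eintegral, integral_eq_lintegral_pos_part_sub_lintegral_neg_part hh]
  exact coe_sub_coe_eq_coe_add_of_add_eq (lintegral_ofReal_neg_lt_top_of_integrable_le hh hhf).ne
    hh.lintegral_lt_top.ne hh.neg.lintegral_lt_top.ne
    (lintegral_ofReal_add_lintegral_ofReal_neg hf hh.aemeasurable hhf)

theorem integral_le_eintegral {f h : Ω → ℝ} (hf : AEMeasurable f μ) (hh : Integrable h μ)
    (hhf : h ≤ᵐ[μ] f) : ((∫ x, h x ∂μ : ℝ) : EReal) ≤ eintegral μ f := by
  rw [eintegral_eq_lintegral_sub_add hf hh hhf]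
  exact le_add_of_nonneg_left (EReal.coe_ennreal_nonneg _)

theorem eintegral_add_integrable {f g h : Ω → ℝ} (hf : AEMeasurable f μ) (hh : Integrable h μ)
    (hhf : h ≤ᵐ[μ] f) (hg : Integrable g μ) :
    eintegral μ (f + g) = eintegral μ f + (∫ x, g x ∂μ : ℝ) := by
  have hle : h + g ≤ᵐ[μ] f + g :=
    hhf.mono fun x hx => add_le_add_left hx (g x)
  rw [eintegral_eq_lintegral_sub_add hf hh hhf,
    eintegral_eq_lintegral_sub_add (hf.add hg.aemeasurable) (hh.add hg) hle,
    integral_add' hh hg, EReal.coe_add, ← add_assoc]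
  simp only [Pi.add_apply, add_sub_add_right_eq_sub]

theorem lowerSemicontinuous_eintegral [TopologicalSpace Ω]
    [TopologicalSpace.PseudoMetrizableSpace Ω] [TopologicalSpace.SeparableSpace Ω] [BorelSpace Ω]
    {f : Ω → ℝ} (hf : LowerSemicontinuous f) {c : ℝ} (hc : ∀ x, c ≤ f x) :
    LowerSemicontinuous fun ν : ProbabilityMeasure Ω => eintegral (ν : Measure Ω) f := by
  have heq (ν : ProbabilityMeasure Ω) : eintegral (ν : Measure Ω) f
      = ((∫⁻ x, ENNReal.ofReal (f x - c) ∂(ν : Measure Ω) : ℝ≥0∞) : EReal) + (c : ℝ) := by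
    simpa using eintegral_eq_lintegral_sub_add hf.measurable.aemeasurable
      (integrable_const (μ := (ν : Measure Ω)) c) (ae_of_all _ hc)
  have hsub : LowerSemicontinuous fun x => ENNReal.ofReal (f x - c) :=
    Continuous.comp_lowerSemicontinuous (g := fun y : ℝ => ENNReal.ofReal (y - c))
      (ENNReal.continuous_ofReal.comp (by fun_prop)) hf fun _ _ h =>
        ENNReal.ofReal_le_ofReal (sub_le_sub_right h c)
  have hadd : Continuous fun y : ℝ≥0∞ => (y : EReal) + (c : ℝ) :=
    continuous_iff_continuousAt.2 fun y =>
      (EReal.continuousAt_add (.inr (by simp)) (.inr (by simp))).comp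
        (f := fun y : ℝ≥0∞ => ((y : EReal), ((c : ℝ) : EReal)))
        (continuous_coe_ennreal_ereal.prodMk continuous_const).continuousAt
  simp_rw [heq]
  exact hadd.comp_lowerSemicontinuous (lowerSemicontinuous_lintegral hsub) fun _ _ h =>
    add_le_add_left (EReal.coe_ennreal_le_coe_ennreal_iff.2 h) _

end ExtendedIntegral

section PolynomialRoots

open Real

theorem norm_eval_le_sum_norm_coeff_mul_pow {R : Type*} [SeminormedRing R] [NormOneClass R]
    (p : R[X]) {x : R} {s : ℝ} (hs : 1 ≤ s) (hx : ‖x‖ ≤ s) :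
    ‖p.eval x‖ ≤ (∑ i ∈ Finset.range (p.natDegree + 1), ‖p.coeff i‖) * s ^ p.natDegree := by
  rw [eval_eq_sum_range, Finset.sum_mul]
  refine norm_sum_le_of_le _ fun i hi => ?_
  calc ‖p.coeff i * x ^ i‖ ≤ ‖p.coeff i‖ * ‖x‖ ^ i :=
        (norm_mul_le _ _).trans (by gcongr; exact norm_pow_le x i)
    _ ≤ ‖p.coeff i‖ * s ^ i := by gcongr
    _ ≤ ‖p.coeff i‖ * s ^ p.natDegree := by
        gcongr ?_ * ?_
        exact pow_le_pow_right₀ hs (Finset.mem_range_succ_iff.1 hi)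

theorem logMahlerMeasure_eq_log_eval_zero_add_sum_posLog_inv {p : ℂ[X]} (hp : p.eval 0 ≠ 0) :
    p.logMahlerMeasure = log ‖p.eval 0‖ + (p.roots.map fun a => log⁺ ‖a‖⁻¹).sum := by
  have hp0 : p ≠ 0 := by rintro rfl; simp at hp
  have hroot : ∀ y ∈ p.roots.map fun a => ‖a‖, y ≠ 0 := by
    simp only [Multiset.mem_map, mem_roots hp0]
    rintro _ ⟨a, ha, rfl⟩ ha0
    obtain rfl := norm_eq_zero.1 ha0
    exact hp ha
  have heval : log ‖p.eval 0‖ = log ‖p.leadingCoeff‖ + (p.roots.map fun a => log ‖a‖).sum := by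
    have hnorm : ‖p.eval 0‖ = ‖p.leadingCoeff‖ * (p.roots.map fun a => ‖a‖).prod := by
      rw [(IsAlgClosed.splits p).eval_eq_prod_roots, norm_mul]
      congr 1
      exact (map_multiset_prod (normHom : ℂ →*₀ ℝ) _).trans (by simp [Multiset.map_map])
    rw [hnorm, log_mul (by simpa) (Multiset.prod_ne_zero fun h => hroot 0 h rfl),
      log_multiset_prod hroot, Multiset.map_map, Function.comp_def]
  have hsub : (p.roots.map fun a => log ‖a‖).sum
      = (p.roots.map fun a => log⁺ ‖a‖).sum - (p.roots.map fun a => log⁺ ‖a‖⁻¹).sum := by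
    simp only [← Multiset.sum_map_sub, posLog_sub_posLog_inv]
  rw [logMahlerMeasure_eq_log_leadingCoeff_add_sum_log_roots, heval, hsub]
  ring

theorem logMahlerMeasure_le_log {p : ℂ[X]} {M : ℝ} (hM : 1 ≤ M)
    (hp : ∀ x : ℂ, ‖x‖ = 1 → ‖p.eval x‖ ≤ M) : p.logMahlerMeasure ≤ log M := by
  refine circleAverage_mono_on_of_le_circle
    (analyticOnNhd_id.aeval_polynomial p).meromorphicOn.circleIntegrable_log_norm fun x hx => ?_
  rcases (norm_nonneg (p.eval x)).eq_or_lt' with h0 | hpos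
  · simp only [h0, log_zero]
    exact log_nonneg hM
  · exact log_le_log hpos (hp x (by simpa using hx))

namespace polPos

variable {p : ℂ[X]}

theorem norm_eval_one (hp : polPos p) :
    ‖p.eval 1‖ = ∑ i ∈ Finset.range (p.natDegree + 1), ‖p.coeff i‖ := by
  have hcoeff (i : ℕ) (hi : i ∈ Finset.range (p.natDegree + 1)) :
      p.coeff i = (‖p.coeff i‖ : ℂ) := by
    obtain ⟨him, hre⟩ := hp.2 i (Finset.mem_range_succ_iff.1 hi)
    exact (Complex.norm_of_nonneg' (Complex.nonneg_iff.2 ⟨hre.le, him.symm⟩)).symm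
  rw [eval_eq_sum_range]
  simp only [one_pow, mul_one]
  rw [Finset.sum_congr rfl hcoeff, ← Complex.ofReal_sum, Complex.norm_of_nonneg (by positivity)]

theorem eval_one_ne_zero (hp : polPos p) : p.eval 1 ≠ 0 := by
  rw [← norm_pos_iff, hp.norm_eval_one]
  have hcoeff : p.coeff 0 ≠ 0 := fun h => by simpa [h] using (hp.2 0 (Nat.zero_le _)).2
  exact Finset.sum_pos' (fun i _ => norm_nonneg _) ⟨0, by simp, norm_pos_iff.2 hcoeff⟩

theorem sum_posLog_le (hp : polPos p) {r : ℝ} (hr : 0 < r) :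
    (p.roots.map fun a => log⁺ (r / ‖1 - a‖)).sum ≤ p.natDegree * log (1 + r) := by
  have h1 := hp.eval_one_ne_zero
  have hrC : (r : ℂ) ≠ 0 := by exact_mod_cast hr.ne'
  set q : ℂ[X] := C (p.eval 1)⁻¹ * p.comp (C (r : ℂ) * X + C 1) with hq
  have hq0 : q.eval 0 = 1 := by simp [hq, h1]
  have hroots : q.roots = p.roots.map fun a => (r : ℂ)⁻¹ * (a - 1) := by
    rw [hq, roots_C_mul _ (inv_ne_zero h1), roots_comp_C_mul_X_add_C _ _ _ hrC.isUnit]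
    simp
  have hJensen : q.logMahlerMeasure = (p.roots.map fun a => log⁺ (r / ‖1 - a‖)).sum := by
    rw [logMahlerMeasure_eq_log_eval_zero_add_sum_posLog_inv (by simp [hq0]), hq0, hroots,
      Multiset.map_map]
    simp [abs_of_pos hr, norm_sub_rev, div_eq_mul_inv, mul_comm]
  have hbound (x : ℂ) (hx : ‖x‖ = 1) : ‖q.eval x‖ ≤ (1 + r) ^ p.natDegree := by
    have hnorm : ‖r * x + 1‖ ≤ 1 + r := by
      refine (norm_add_le _ _).trans_eq ?_
      simp [hx, abs_of_pos hr, add_comm]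
    have := norm_eval_le_sum_norm_coeff_mul_pow p (by linarith) hnorm
    rw [← hp.norm_eval_one] at this
    simpa [hq, inv_mul_le_iff₀ (norm_pos_iff.2 h1)] using this
  rw [← hJensen, ← log_pow]
  exact logMahlerMeasure_le_log (one_le_pow₀ (by linarith)) hbound

end polPos

end PolynomialRoots

section ZeroMeasures

open Real

/-- The kernel `log⁺ (r / |1 - z|)` of Jensen's formula at `1`, with its true value `⊤` at `z = 1`,
where the real expression takes the junk value `0`; this makes it continuous. -/
noncomputable def jensenKernel (r : ℝ) (z : ℂ) : ℝ≥0∞ :=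
  (ENNReal.log (ENNReal.ofReal r / ‖1 - z‖ₑ)).toENNReal

theorem continuous_jensenKernel (r : ℝ) : Continuous (jensenKernel r) := by
  have hdiv : Continuous fun z : ℂ => ENNReal.ofReal r / ‖1 - z‖ₑ := by
    simp only [div_eq_mul_inv]
    exact (ENNReal.continuous_const_mul ENNReal.ofReal_ne_top).comp (by fun_prop)
  exact (ENNReal.continuous_log.comp hdiv).ereal_toENNReal

theorem jensenKernel_one {r : ℝ} (hr : 0 < r) : jensenKernel r 1 = ⊤ := by
  simp [jensenKernel, ENNReal.div_zero, hr]

theorem jensenKernel_of_ne_one {r : ℝ} (hr : 0 < r) {z : ℂ} (hz : z ≠ 1) :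
    jensenKernel r z = ENNReal.ofReal (log⁺ (r / ‖1 - z‖)) := by
  have hpos : 0 < ‖1 - z‖ := norm_pos_iff.2 (sub_ne_zero.2 hz.symm)
  rw [jensenKernel, ← ofReal_norm, ← ENNReal.ofReal_div_of_pos hpos,
    ENNReal.log_ofReal_of_pos (by positivity), EReal.real_coe_toENNReal, posLog_apply,
    ENNReal.ofReal_max, ENNReal.ofReal_zero, max_eq_right zero_le]

theorem toReal_jensenKernel {r : ℝ} (hr : 0 < r) (z : ℂ) :
    (jensenKernel r z).toReal = log⁺ (r / ‖1 - z‖) := by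
  rcases eq_or_ne z 1 with rfl | hz
  · simp [jensenKernel_one hr]
  · rw [jensenKernel_of_ne_one hr hz, ENNReal.toReal_ofReal posLog_nonneg]

theorem lintegral_multiset_sum_dirac {α : Type*} [MeasurableSpace α] {f : α → ℝ≥0∞}
    (hf : Measurable f) (s : Multiset α) :
    ∫⁻ x, f x ∂(s.map Measure.dirac).sum = (s.map f).sum := by
  induction s using Multiset.induction_on with
  | empty => simp
  | cons a s ih => simp [lintegral_add_measure, lintegral_dirac' a hf, ih]

theorem multiset_sum_map_ofReal {α : Type*} {f : α → ℝ} (hf : ∀ a, 0 ≤ f a) (s : Multiset α) :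
    (s.map fun a => ENNReal.ofReal (f a)).sum = ENNReal.ofReal (s.map f).sum := by
  induction s using Multiset.induction_on with
  | empty => simp
  | cons a s ih =>
    have hs : 0 ≤ (s.map f).sum := Multiset.sum_nonneg (by simpa using fun a _ => hf a)
    simp [ih, ENNReal.ofReal_add (hf a) hs]

theorem polPos.lintegral_jensenKernel_le {p : ℂ[X]} (hp : polPos p) {r : ℝ} (hr : 0 < r) :
    ∫⁻ z, jensenKernel r z ∂zeroMeasure p ≤ ENNReal.ofReal (log (1 + r)) := by
  have hroots : p.roots.map (jensenKernel r)
      = p.roots.map fun a => ENNReal.ofReal (log⁺ (r / ‖1 - a‖)) :=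
    Multiset.map_congr rfl fun a ha => jensenKernel_of_ne_one hr <| by
      rintro rfl
      exact hp.eval_one_ne_zero (isRoot_of_mem_roots ha)
  have hdeg : (p.natDegree : ℝ≥0∞) ≠ 0 := by exact_mod_cast hp.1.ne'
  calc ∫⁻ z, jensenKernel r z ∂zeroMeasure p
      = (p.natDegree : ℝ≥0∞)⁻¹ * ENNReal.ofReal (p.roots.map fun a => log⁺ (r / ‖1 - a‖)).sum := by
        rw [zeroMeasure, lintegral_smul_measure, smul_eq_mul,
          lintegral_multiset_sum_dirac (continuous_jensenKernel r).measurable, hroots,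
          multiset_sum_map_ofReal fun _ => posLog_nonneg]
    _ ≤ (p.natDegree : ℝ≥0∞)⁻¹ * ENNReal.ofReal (p.natDegree * log (1 + r)) := by
        gcongr
        exact hp.sum_posLog_le hr
    _ = ENNReal.ofReal (log (1 + r)) := by
        rw [ENNReal.ofReal_mul (by positivity), ENNReal.ofReal_natCast,
          ENNReal.inv_mul_cancel_left hdeg (ENNReal.natCast_ne_top _)]

variable {μ : ProbabilityMeasure ℂ}

theorem lintegral_jensenKernel_le (hμ : μ ∈ calP) {r : ℝ} (hr : 0 < r) :
    ∫⁻ z, jensenKernel r z ∂(μ : Measure ℂ) ≤ ENNReal.ofReal (log (1 + r)) := by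
  have hlsc := lowerSemicontinuous_lintegral (continuous_jensenKernel r).lowerSemicontinuous
  refine closure_minimal ?_ (hlsc.isClosed_preimage (ENNReal.ofReal (log (1 + r)))) hμ
  rintro ν ⟨p, hp, hν⟩
  simpa only [Set.mem_preimage, Set.mem_Iic, hν] using hp.lintegral_jensenKernel_le hr

theorem ae_ne_one_of_mem_calP (hμ : μ ∈ calP) : ∀ᵐ z ∂(μ : Measure ℂ), z ≠ 1 := by
  have hfin := (lintegral_jensenKernel_le hμ one_pos).trans_lt ENNReal.ofReal_lt_top
  filter_upwards [ae_lt_top (continuous_jensenKernel 1).measurable hfin.ne] with z hz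
  rintro rfl
  exact hz.ne (jensenKernel_one one_pos)

theorem integrable_posLog_of_mem_calP (hμ : μ ∈ calP) {r : ℝ} (hr : 0 < r) :
    Integrable (fun z : ℂ => log⁺ (r / ‖1 - z‖)) (μ : Measure ℂ) := by
  have hfin := (lintegral_jensenKernel_le hμ hr).trans_lt ENNReal.ofReal_lt_top
  simpa only [toReal_jensenKernel hr] using integrable_toReal_of_lintegral_ne_top
    (continuous_jensenKernel r).measurable.aemeasurable hfin.ne

theorem integral_posLog_le_of_mem_calP (hμ : μ ∈ calP) {r : ℝ} (hr : 0 < r) :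
    ∫ z, log⁺ (r / ‖1 - z‖) ∂(μ : Measure ℂ) ≤ log (1 + r) := by
  have hmeas := (continuous_jensenKernel r).measurable
  have hle := lintegral_jensenKernel_le hμ hr
  have hae := ae_lt_top hmeas (μ := (μ : Measure ℂ)) (hle.trans_lt ENNReal.ofReal_lt_top).ne
  simp only [← toReal_jensenKernel hr]
  rw [integral_toReal hmeas.aemeasurable hae]
  exact ENNReal.toReal_le_of_le_ofReal (log_nonneg (by linarith)) hle

end ZeroMeasures

section TruncatedKernel

open Real

theorem log_max_eq_log_add_posLog_div {s r : ℝ} (hs : 0 < s) (hr : 0 < r) :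
    log (max s r) = log s + log⁺ (r / s) := by
  rw [posLog_apply, log_div hr.ne' hs.ne', strictMonoOn_log.monotoneOn.map_max hs hr,
    ← max_add_add_left, add_zero, add_sub_cancel]

/-- The kernel `fker` with `|1 - z|` and `|1 - w|` truncated from below at `r`, which makes it
lower semicontinuous and bounded below. -/
noncomputable def truncKer (r : ℝ) (q : ℂ × ℂ) : ℝ :=
  log (max ‖1 - q.1‖ r) + log (max ‖1 - q.2‖ r) - log ‖q.1 - q.2‖

theorem truncKer_eq_fker_add {r : ℝ} (hr : 0 < r) {q : ℂ × ℂ} (h₁ : q.1 ≠ 1) (h₂ : q.2 ≠ 1) :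
    truncKer r q = fker q.1 q.2 + (log⁺ (r / ‖1 - q.1‖) + log⁺ (r / ‖1 - q.2‖)) := by
  have hpos {z : ℂ} (hz : z ≠ 1) : 0 < ‖1 - z‖ := norm_pos_iff.2 (sub_ne_zero.2 hz.symm)
  rw [truncKer, fker, log_max_eq_log_add_posLog_div (hpos h₁) hr,
    log_max_eq_log_add_posLog_div (hpos h₂) hr]
  ring

theorem lowerSemicontinuous_truncKer {r : ℝ} (hr : 0 < r) : LowerSemicontinuous (truncKer r) := by
  have hcont : Continuous fun q : ℂ × ℂ => log (max ‖1 - q.1‖ r) + log (max ‖1 - q.2‖ r) := by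
    fun_prop (disch := intro q; exact (lt_max_of_lt_right hr).ne')
  have hlog : LowerSemicontinuous fun q : ℂ × ℂ => -log ‖q.1 - q.2‖ :=
    lowerSemicontinuous_neg_log.comp (by fun_prop)
  exact hcont.lowerSemicontinuous.add hlog

theorem le_truncKer {r : ℝ} (hr : 0 < r) (q : ℂ × ℂ) :
    min (2 * log r) (log r - log 2) ≤ truncKer r q := by
  rw [truncKer]
  set a := max ‖1 - q.1‖ r
  set b := max ‖1 - q.2‖ r
  have hra : r ≤ a := le_max_right _ _
  have hrb : r ≤ b := le_max_right _ _
  have hloga := log_le_log hr hra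
  have hlogb := log_le_log hr hrb
  rcases (norm_nonneg (q.1 - q.2)).eq_or_lt' with h0 | hpos
  · -- The junk value `log 0 = 0` gives the diagonal its own lower bound.
    rw [h0, log_zero]
    exact (min_le_left _ _).trans (by linarith)
  · have htri : ‖q.1 - q.2‖ ≤ a + b := by
      rw [← sub_sub_sub_cancel_left q.2 q.1 1, add_comm]
      exact (norm_sub_le _ _).trans (add_le_add (le_max_left _ _) (le_max_left _ _))
    have hmul : r * ‖q.1 - q.2‖ ≤ 2 * (a * b) := by nlinarith
    have hlog := log_le_log (by positivity) hmul
    rw [log_mul hr.ne' hpos.ne', log_mul two_ne_zero (by positivity),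
      log_mul (by positivity) (by positivity)] at hlog
    exact (min_le_right _ _).trans (by linarith)

theorem lowerSemicontinuous_eintegral_prod_truncKer {r : ℝ} (hr : 0 < r) :
    LowerSemicontinuous fun μ : ProbabilityMeasure ℂ =>
      eintegral ((μ : Measure ℂ).prod μ) (truncKer r) := by
  have hprod : Continuous fun μ : ProbabilityMeasure ℂ => μ.prod μ :=
    ProbabilityMeasure.continuous_prod.comp (continuous_id.prodMk continuous_id)
  exact LowerSemicontinuous.comp
    (lowerSemicontinuous_eintegral (lowerSemicontinuous_truncKer hr) (le_truncKer hr)) hprod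

variable {μ : ProbabilityMeasure ℂ}

theorem truncKer_ae_eq_fker_add (hμ : μ ∈ calP) {r : ℝ} (hr : 0 < r) :
    truncKer r =ᵐ[(μ : Measure ℂ).prod μ]
      (fun q => fker q.1 q.2) + fun q => log⁺ (r / ‖1 - q.1‖) + log⁺ (r / ‖1 - q.2‖) := by
  have hne := ae_ne_one_of_mem_calP hμ
  filter_upwards [Measure.quasiMeasurePreserving_fst.ae hne,
    Measure.quasiMeasurePreserving_snd.ae hne] with q h₁ h₂
  exact truncKer_eq_fker_add hr h₁ h₂

theorem integrable_posLog_add_posLog (hμ : μ ∈ calP) {r : ℝ} (hr : 0 < r) :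
    Integrable (fun q : ℂ × ℂ => log⁺ (r / ‖1 - q.1‖) + log⁺ (r / ‖1 - q.2‖))
      ((μ : Measure ℂ).prod μ) :=
  have h := integrable_posLog_of_mem_calP hμ hr
  (h.comp_fst _).add (h.comp_snd _)

theorem integral_posLog_add_posLog (hμ : μ ∈ calP) {r : ℝ} (hr : 0 < r) :
    ∫ q : ℂ × ℂ, (log⁺ (r / ‖1 - q.1‖) + log⁺ (r / ‖1 - q.2‖)) ∂(μ : Measure ℂ).prod μ
      = 2 * ∫ z, log⁺ (r / ‖1 - z‖) ∂(μ : Measure ℂ) := by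
  have h := integrable_posLog_of_mem_calP hμ hr
  rw [integral_add (h.comp_fst _) (h.comp_snd _),
    integral_fun_fst (fun z : ℂ => log⁺ (r / ‖1 - z‖)),
    integral_fun_snd (fun z : ℂ => log⁺ (r / ‖1 - z‖))]
  simp [two_mul]

/-- An integrable minorant of `fker` that works for every measure in `calP`. -/
noncomputable def fkerMinorant (q : ℂ × ℂ) : ℝ :=
  -log 2 - (log⁺ (1 / ‖1 - q.1‖) + log⁺ (1 / ‖1 - q.2‖))

theorem fkerMinorant_ae_le (hμ : μ ∈ calP) :
    fkerMinorant ≤ᵐ[(μ : Measure ℂ).prod μ] fun q => fker q.1 q.2 := by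
  filter_upwards [truncKer_ae_eq_fker_add hμ one_pos] with q hq
  have hle := le_truncKer one_pos q
  rw [hq, log_one, mul_zero, zero_sub, min_eq_right (neg_nonpos.2 (log_nonneg one_le_two))] at hle
  rw [fkerMinorant]
  exact sub_le_iff_le_add.2 hle

theorem integrable_fkerMinorant (hμ : μ ∈ calP) :
    Integrable fkerMinorant ((μ : Measure ℂ).prod μ) :=
  (integrable_const _).sub (integrable_posLog_add_posLog hμ one_pos)

theorem le_integral_fkerMinorant (hμ : μ ∈ calP) :
    -(3 * log 2) ≤ ∫ q, fkerMinorant q ∂(μ : Measure ℂ).prod μ := by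
  have hle := integral_posLog_le_of_mem_calP hμ one_pos
  rw [one_add_one_eq_two] at hle
  simp only [fkerMinorant]
  rw [integral_sub (integrable_const _) (integrable_posLog_add_posLog hμ one_pos),
    integral_posLog_add_posLog hμ one_pos, integral_const, probReal_univ, one_smul]
  linarith

theorem measurable_fker : Measurable fun q : ℂ × ℂ => fker q.1 q.2 := by
  unfold fker
  fun_prop

theorem eintegral_truncKer (hμ : μ ∈ calP) {r : ℝ} (hr : 0 < r) :
    eintegral ((μ : Measure ℂ).prod μ) (truncKer r)
      = doubleInt μ + (2 * ∫ z, log⁺ (r / ‖1 - z‖) ∂(μ : Measure ℂ) : ℝ) := by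
  rw [eintegral_congr_ae (truncKer_ae_eq_fker_add hμ hr),
    eintegral_add_integrable measurable_fker.aemeasurable (integrable_fkerMinorant hμ)
      (fkerMinorant_ae_le hμ) (integrable_posLog_add_posLog hμ hr),
    integral_posLog_add_posLog hμ hr]
  rfl

theorem lowerSemicontinuousOn_doubleInt :
    LowerSemicontinuousOn (fun μ : ProbabilityMeasure ℂ => doubleInt μ) calP := by
  refine lowerSemicontinuousOn_of_forall_exists_le_le_add fun ε hε =>
    ⟨fun μ => eintegral ((μ : Measure ℂ).prod μ) (truncKer (ε / 2)),
      (lowerSemicontinuous_eintegral_prod_truncKer (half_pos hε)).lowerSemicontinuousOn _,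
      fun μ hμ => ?_⟩
  have hint : 2 * ∫ z, log⁺ (ε / 2 / ‖1 - z‖) ∂(μ : Measure ℂ) ≤ ε := by
    have hle := integral_posLog_le_of_mem_calP hμ (half_pos hε)
    have hlog := log_le_sub_one_of_pos (x := 1 + ε / 2) (by positivity)
    linarith
  have hnonneg : 0 ≤ 2 * ∫ z, log⁺ (ε / 2 / ‖1 - z‖) ∂(μ : Measure ℂ) :=
    mul_nonneg zero_le_two (integral_nonneg fun _ => posLog_nonneg)
  simp only [eintegral_truncKer hμ (half_pos hε)]
  exact ⟨le_add_of_nonneg_right (EReal.coe_nonneg.2 hnonneg),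
    add_le_add_right (EReal.coe_le_coe_iff.2 hint) _⟩

theorem lintegral_ofReal_neg_fker_lt_top (hμ : μ ∈ calP) :
    ∫⁻ q : ℂ × ℂ, ENNReal.ofReal (-fker q.1 q.2) ∂(μ : Measure ℂ).prod μ < ⊤ :=
  lintegral_ofReal_neg_lt_top_of_integrable_le (integrable_fkerMinorant hμ) (fkerMinorant_ae_le hμ)

theorem le_doubleInt (hμ : μ ∈ calP) : ((-(3 * log 2) : ℝ) : EReal) ≤ doubleInt μ :=
  (EReal.coe_le_coe_iff.2 (le_integral_fkerMinorant hμ)).trans <|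
    integral_le_eintegral measurable_fker.aemeasurable (integrable_fkerMinorant hμ)
      (fkerMinorant_ae_le hμ)

theorem lowerSemicontinuous_rateI : LowerSemicontinuous rateI := by
  have htop : (2 : EReal)⁻¹ ≠ ⊤ := EReal.coe_ne_top (2⁻¹ : ℝ)
  exact lowerSemicontinuous_ite_top
    (lowerSemicontinuousOn_ereal_const_mul lowerSemicontinuousOn_doubleInt
      (EReal.inv_nonneg_of_nonneg zero_le_two) htop)
    isClosed_closure

end TruncatedKernel

/-- The rate function `I` is well defined and lower semicontinuous: for every
`μ ∈ 𝒫` the negative part of `f(z,w) = log|1-z| + log|1-w| - log|z-w|` is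
integrable with respect to `μ ⊗ μ` (so the integral of `f` is well defined in
`(-∞,∞]`), the integral is uniformly bounded below over `𝒫`, and
`I : M₁(ℂ) → (-∞,∞]` is lower semicontinuous with respect to weak convergence. -/
theorem rateI_wellDefined_lsc :
    (∃ c : ℝ, ∀ μ ∈ calP,
      (∫⁻ q : ℂ × ℂ, ENNReal.ofReal (-(fker q.1 q.2))
          ∂((μ : Measure ℂ).prod (μ : Measure ℂ))) < ⊤ ∧
      (c : EReal) ≤ doubleInt (μ : Measure ℂ)) ∧
    LowerSemicontinuous rateI :=
  ⟨⟨-(3 * Real.log 2), fun _ hμ => ⟨lintegral_ofReal_neg_fker_lt_top hμ, le_doubleInt hμ⟩⟩,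
    lowerSemicontinuous_rateI⟩
end

section
/- Exponential tightness: for every T > 0 there exists a compact set K_T ⊂ M_1(ℂ) such that limsup_{n→∞} (1/n²) log P(L_n ∉ K_T) ≤ −T. -/
open MeasureTheory ProbabilityTheory Filter Polynomial
open scoped ENNReal NNReal Classical

noncomputable section

/-- The random polynomial `P_n(z) = ∑_{j=0}^n ξ_j z^j` built from real coefficients. -/
def randPoly {Ω : Type*} (ξ : ℕ → Ω → ℝ) (n : ℕ) (ω : Ω) : Polynomial ℂ :=
  ∑ j ∈ Finset.range (n + 1), Polynomial.C ((ξ j ω : ℝ) : ℂ) * Polynomial.X ^ j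

end

/-!
Let `p` have degree `n` and `k` zeros of modulus larger than `R`. Dividing all zeros by `R` divides
the Mahler measure of `p` by at least `R ^ k`, while the coefficient of `X ^ j` is only divided by
`R ^ (n - j)`. Since coefficients are bounded by the Mahler measure up to binomial coefficients,
`k ≥ n / m` forces all coefficients with index in `[n - n / (2 m), n]` to be smaller than
`M(p) R ^ (-n / (2 m))` up to a factor `2 ^ n`. For random coefficients, `M(p)` is at most
exponential in `n` and one of these `n / (2 m)` independent coefficients is at least `exp (-δ n)`,
outside an event of probability `exp (-b n ^ 2)`. Hence, for each `m`, a large ball misses at most a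
fraction `1 / m` of the zeros outside such an event, and summing over `m` and applying Prokhorov's
theorem gives exponential tightness.
-/

section ZerosAndCoefficients

lemma prod_max_one_inv_mul_norm_mul_pow_le {R : ℝ} (hR : 1 ≤ R) (s : Multiset ℂ) :
    (s.map fun z ↦ max 1 (R⁻¹ * ‖z‖)).prod * R ^ s.countP (R < ‖·‖) ≤
      (s.map fun z ↦ max 1 ‖z‖).prod := by
  have hR0 : 0 < R := by linarith
  induction s using Multiset.induction_on with
  | empty => simp
  | cons z s ih =>
    have hprod (f : ℂ → ℝ) : 0 ≤ (s.map fun z ↦ max 1 (f z)).prod :=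
      Multiset.prod_nonneg fun x hx ↦ by
        obtain ⟨z, -, rfl⟩ := Multiset.mem_map.1 hx
        positivity
    simp only [Multiset.map_cons, Multiset.prod_cons]
    by_cases hz : R < ‖z‖
    · have hz' : max 1 (R⁻¹ * ‖z‖) * R = max 1 ‖z‖ := by
        rw [max_mul_of_nonneg _ _ hR0.le, one_mul, mul_right_comm, inv_mul_cancel₀ hR0.ne', one_mul,
          max_eq_right hz.le, max_eq_right (hR.trans hz.le)]
      rw [Multiset.countP_cons_of_pos (p := (R < ‖·‖)) s hz, pow_succ', mul_mul_mul_comm, hz']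
      gcongr
    · rw [Multiset.countP_cons_of_neg (p := (R < ‖·‖)) s hz, mul_assoc]
      have hz' : R⁻¹ * ‖z‖ ≤ ‖z‖ :=
        mul_le_of_le_one_left (norm_nonneg z) (inv_le_one_of_one_le₀ hR)
      have := hprod fun z ↦ R⁻¹ * ‖z‖
      gcongr

lemma mahlerMeasure_scaleRoots_inv_mul_pow_le {R : ℝ} (hR : 1 ≤ R) (p : ℂ[X]) :
    (p.scaleRoots (R : ℂ)⁻¹).mahlerMeasure * R ^ p.roots.countP (R < ‖·‖) ≤ p.mahlerMeasure := by
  have hR0 : 0 < R := by linarith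
  have hunit : IsUnit (R : ℂ)⁻¹ := by simpa using hR0.ne'
  have hnorm (z : ℂ) : ‖(R : ℂ)⁻¹ * z‖ = R⁻¹ * ‖z‖ := by simp [abs_of_pos hR0]
  simp only [mahlerMeasure_eq_leadingCoeff_mul_prod_roots, leadingCoeff_scaleRoots,
    roots_scaleRoots p hunit, Multiset.map_map, Function.comp_def, hnorm, mul_assoc]
  gcongr
  exact prod_max_one_inv_mul_norm_mul_pow_le hR p.roots

lemma norm_coeff_mul_pow_le_choose_mul_mahlerMeasure {R : ℝ} (hR : 1 ≤ R) (p : ℂ[X]) {j t : ℕ}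
    (h : p.natDegree - j + t ≤ p.roots.countP (R < ‖·‖)) :
    ‖p.coeff j‖ * R ^ t ≤ p.natDegree.choose j * p.mahlerMeasure := by
  have hR0 : 0 < R := by linarith
  set k := p.roots.countP (R < ‖·‖)
  have hscaled : ‖p.coeff j‖ * (R ^ (p.natDegree - j))⁻¹ ≤
      p.natDegree.choose j * (p.scaleRoots (R : ℂ)⁻¹).mahlerMeasure := by
    simpa [abs_of_pos hR0] using
      norm_coeff_le_choose_mul_mahlerMeasure j (p.scaleRoots (R : ℂ)⁻¹)
  calc ‖p.coeff j‖ * R ^ t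
      = ‖p.coeff j‖ * (R ^ (p.natDegree - j))⁻¹ * R ^ (p.natDegree - j + t) := by
        rw [pow_add]; field_simp
    _ ≤ p.natDegree.choose j * (p.scaleRoots (R : ℂ)⁻¹).mahlerMeasure * R ^ k := by
        gcongr
        exact mul_nonneg (by positivity) (mahlerMeasure_nonneg _)
    _ ≤ p.natDegree.choose j * p.mahlerMeasure := by
        rw [mul_assoc]
        gcongr
        exact mahlerMeasure_scaleRoots_inv_mul_pow_le hR p

lemma mahlerMeasure_le_natDegree_add_one_mul {p : ℂ[X]} {B : ℝ}
    (hB : ∀ i ≤ p.natDegree, ‖p.coeff i‖ ≤ B) : p.mahlerMeasure ≤ (p.natDegree + 1) * B :=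
  calc p.mahlerMeasure ≤ ∑ i ∈ Finset.range (p.natDegree + 1), ‖p.coeff i‖ := by
        simpa [sum_over_range] using mahlerMeasure_le_sum_norm_coeff p
    _ ≤ (p.natDegree + 1) * B := by
        simpa using Finset.sum_le_card_nsmul (Finset.range (p.natDegree + 1)) _ B
          fun i hi ↦ hB i (Finset.mem_range_succ_iff.1 hi)

lemma countP_roots_mul_le_natDegree {p : ℂ[X]} {m j : ℕ} {β δ : ℝ} (hβδ : 0 ≤ β + δ)
    (hβ : ∀ i ≤ p.natDegree, ‖p.coeff i‖ ≤ Real.exp (β * p.natDegree))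
    (hj : 2 * m * (p.natDegree - j) ≤ p.natDegree)
    (hδ : Real.exp (-(δ * p.natDegree)) < ‖p.coeff j‖) :
    p.roots.countP ((4 * Real.exp (β + δ)) ^ (2 * m) < ‖·‖) * m ≤ p.natDegree := by
  set n := p.natDegree
  set S := 4 * Real.exp (β + δ) with hS
  set k := p.roots.countP (S ^ (2 * m) < ‖·‖)
  have hS1 : 1 ≤ S := by linarith [Real.one_le_exp hβδ]
  by_contra! hkm
  obtain ⟨t, ht⟩ : ∃ t, n - j + t = k := by
    refine ⟨k - (n - j), Nat.add_sub_cancel' ?_⟩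
    nlinarith
  have hnt : n ≤ 2 * m * t := by nlinarith
  have hchoose : (n.choose j : ℝ) ≤ 2 ^ n := by exact_mod_cast Nat.choose_le_two_pow n j
  have hsucc : (n : ℝ) + 1 ≤ 2 ^ n := by exact_mod_cast Nat.lt_two_pow_self
  have hSn : S ^ n * Real.exp (-(δ * n)) = 2 ^ n * (2 ^ n * Real.exp (β * n)) := by
    rw [hS, mul_pow, ← Real.exp_nat_mul, mul_assoc, ← Real.exp_add, ← mul_assoc, ← mul_pow]
    ring_nf
  have hupper : ‖p.coeff j‖ * S ^ n ≤ Real.exp (-(δ * n)) * S ^ n :=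
    calc ‖p.coeff j‖ * S ^ n ≤ ‖p.coeff j‖ * (S ^ (2 * m)) ^ t := by
          rw [← pow_mul]
          gcongr
      _ ≤ n.choose j * p.mahlerMeasure :=
          norm_coeff_mul_pow_le_choose_mul_mahlerMeasure (one_le_pow₀ hS1) p ht.le
      _ ≤ 2 ^ n * ((n + 1) * Real.exp (β * n)) :=
          mul_le_mul hchoose (mahlerMeasure_le_natDegree_add_one_mul hβ) (mahlerMeasure_nonneg p)
            (by positivity)
      _ ≤ 2 ^ n * (2 ^ n * Real.exp (β * n)) := by gcongr
      _ = Real.exp (-(δ * n)) * S ^ n := by rw [← hSn, mul_comm]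
  exact hδ.not_ge (le_of_mul_le_mul_right hupper (by positivity))

lemma sum_map_dirac_apply {α : Type*} [MeasurableSpace α] (s : Multiset α) {q : α → Prop}
    [DecidablePred q] (hq : MeasurableSet {x | q x}) :
    (s.map Measure.dirac).sum {x | q x} = s.countP q := by
  induction s using Multiset.induction_on with
  | empty => simp
  | cons x s ih =>
    rw [Multiset.map_cons, Multiset.sum_cons, Measure.add_apply, ih, Measure.dirac_apply' _ hq]
    by_cases hx : q x <;> simp [hx, add_comm]

lemma zeroMeasure_compl_closedBall_le_inv {p : ℂ[X]} (hp : 0 < p.natDegree) {m : ℕ} (hm : 0 < m)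
    {R : ℝ} (h : p.roots.countP (R < ‖·‖) * m ≤ p.natDegree) :
    zeroMeasure p (Metric.closedBall 0 R)ᶜ ≤ (m : ℝ≥0∞)⁻¹ := by
  have hset : (Metric.closedBall (0 : ℂ) R)ᶜ = {z | R < ‖z‖} := by ext; simp
  have hmeas : MeasurableSet {z : ℂ | R < ‖z‖} := measurableSet_lt (by fun_prop) (by fun_prop)
  rw [zeroMeasure, Measure.smul_apply, hset, sum_map_dirac_apply _ hmeas, smul_eq_mul,
    ENNReal.inv_mul_le_iff (by simpa using hp.ne') (by simp), ← div_eq_mul_inv,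
    ENNReal.le_div_iff_mul_le (by simp [hm.ne']) (by simp)]
  exact_mod_cast h

end ZerosAndCoefficients

section CoefficientTails

variable {Ω E : Type*} [MeasurableSpace Ω] {P : Measure Ω} {ξ : ℕ → Ω → E} {A : ℝ≥0} {b : ℝ}

lemma exists_measure_exists_exp_lt_norm_le [Norm E] {c : ℝ} (hc : 0 < c)
    (htail : ∀ j x, 0 ≤ x →
      P {ω | x < ‖ξ j ω‖} ≤ ENNReal.ofReal (A * Real.exp (-(c * x)))) (hb : 0 ≤ b) :
    ∃ β : ℝ, 0 ≤ β ∧ ∀ n : ℕ, 1 ≤ n →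
      P {ω | ∃ j ≤ n, Real.exp (β * n) < ‖ξ j ω‖} ≤ ENNReal.ofReal (Real.exp (-(b * n ^ 2))) := by
  set B : ℝ := b + 1 + A with hB
  set β : ℝ := √(2 * B / c) with hβ
  refine ⟨β, Real.sqrt_nonneg _, fun n hn ↦ ?_⟩
  have hn' : (1 : ℝ) ≤ n := by exact_mod_cast hn
  have hthreshold : B * n ^ 2 ≤ c * Real.exp (β * n) := by
    have hsq : c * β ^ 2 = 2 * B := by
      rw [hβ, Real.sq_sqrt (by positivity)]
      field_simp
    have hquad := Real.quadratic_le_exp_of_nonneg (x := β * n) (by positivity)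
    calc B * n ^ 2 = c * ((β * n) ^ 2 / 2) := by linear_combination -(n : ℝ) ^ 2 / 2 * hsq
      _ ≤ c * Real.exp (β * n) := by
          gcongr
          have : 0 ≤ β * n := by positivity
          linarith
  have hcount : (n : ℝ) + 1 ≤ Real.exp (n ^ 2) :=
    (Real.add_one_le_exp _).trans (Real.exp_le_exp.2 (by nlinarith))
  have hA : (A : ℝ) ≤ Real.exp (A * n ^ 2) := by
    have : (A : ℝ) ≤ A * n ^ 2 := le_mul_of_one_le_right A.coe_nonneg (one_le_pow₀ hn')
    linarith [Real.add_one_le_exp (A * (n : ℝ) ^ 2)]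
  calc P {ω | ∃ j ≤ n, Real.exp (β * n) < ‖ξ j ω‖}
      ≤ P (⋃ j ∈ Finset.range (n + 1), {ω | Real.exp (β * n) < ‖ξ j ω‖}) := by
        refine measure_mono fun ω ⟨j, hj, hω⟩ ↦ ?_
        exact Set.mem_biUnion (Finset.mem_coe.2 (Finset.mem_range_succ_iff.2 hj)) hω
    _ ≤ ∑ j ∈ Finset.range (n + 1), P {ω | Real.exp (β * n) < ‖ξ j ω‖} :=
        measure_biUnion_finset_le _ _
    _ ≤ ∑ _j ∈ Finset.range (n + 1), ENNReal.ofReal (A * Real.exp (-(c * Real.exp (β * n)))) :=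
        Finset.sum_le_sum fun j _ ↦ htail j _ (Real.exp_pos _).le
    _ = ENNReal.ofReal ((n + 1) * (A * Real.exp (-(c * Real.exp (β * n))))) := by
        rw [Finset.sum_const, Finset.card_range, nsmul_eq_mul, ← ENNReal.ofReal_natCast,
          ← ENNReal.ofReal_mul (Nat.cast_nonneg _), Nat.cast_add_one]
    _ ≤ ENNReal.ofReal (Real.exp (n ^ 2) * (Real.exp (A * n ^ 2) * Real.exp (-(B * n ^ 2)))) := by
        gcongr
    _ = ENNReal.ofReal (Real.exp (-(b * n ^ 2))) := by
        rw [← Real.exp_add, ← Real.exp_add, hB]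
        ring_nf

lemma exists_measure_forall_norm_le_exp_neg_le [SeminormedAddCommGroup E] [MeasurableSpace E]
    [OpensMeasurableSpace E] (hindep : iIndepFun ξ P)
    (hsmall : ∀ j x, 0 ≤ x → P {ω | ‖ξ j ω‖ ≤ x} ≤ ENNReal.ofReal (A * x))
    {m : ℕ} (hm : 0 < m) (hb : 0 ≤ b) :
    ∃ δ : ℝ, 0 ≤ δ ∧ ∀ n : ℕ, 1 ≤ n →
      P {ω | ∀ j ≤ n, 2 * m * (n - j) ≤ n → ‖ξ j ω‖ ≤ Real.exp (-(δ * n))} ≤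
        ENNReal.ofReal (Real.exp (-(b * n ^ 2))) := by
  refine ⟨A + 2 * m * b, by positivity, fun n hn ↦ ?_⟩
  set δ : ℝ := A + 2 * m * b with hδ
  set q := n / (2 * m)
  have hn' : (1 : ℝ) ≤ n := by exact_mod_cast hn
  have hcard : (Finset.Icc (n - q) n).card = q + 1 := by
    have hqn : q ≤ n := Nat.div_le_self _ _
    clear_value q
    rw [Nat.card_Icc]
    omega
  have hnq : (n : ℝ) ≤ 2 * m * (q + 1) := by
    exact_mod_cast (Nat.lt_mul_div_succ n (by omega : 0 < 2 * m)).le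
  have hfactor : A * Real.exp (-(δ * n)) ≤ Real.exp (-(2 * m * b * n)) := by
    have hA : (A : ℝ) ≤ Real.exp (A * n) := by
      have : (A : ℝ) ≤ A * n := le_mul_of_one_le_right A.coe_nonneg hn'
      linarith [Real.add_one_le_exp (A * (n : ℝ))]
    calc A * Real.exp (-(δ * n)) ≤ Real.exp (A * n) * Real.exp (-(δ * n)) := by gcongr
      _ = Real.exp (-(2 * m * b * n)) := by
          rw [← Real.exp_add, hδ]
          ring_nf
  calc P {ω | ∀ j ≤ n, 2 * m * (n - j) ≤ n → ‖ξ j ω‖ ≤ Real.exp (-(δ * n))}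
      ≤ P (⋂ j ∈ Finset.Icc (n - q) n, ξ j ⁻¹' {x | ‖x‖ ≤ Real.exp (-(δ * n))}) := by
        refine measure_mono fun ω hω ↦ Set.mem_iInter₂.2 fun j hj ↦ ?_
        rw [Finset.mem_Icc] at hj
        refine hω j hj.2 (le_trans ?_ (Nat.mul_div_le n (2 * m)))
        gcongr
        exact tsub_le_iff_tsub_le.1 hj.1
    _ = ∏ j ∈ Finset.Icc (n - q) n, P {ω | ‖ξ j ω‖ ≤ Real.exp (-(δ * n))} :=
        hindep.measure_inter_preimage_eq_mul _ fun _ _ ↦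
          (isClosed_le continuous_norm continuous_const).measurableSet
    _ ≤ ∏ _j ∈ Finset.Icc (n - q) n, ENNReal.ofReal (Real.exp (-(2 * m * b * n))) :=
        Finset.prod_le_prod' fun j _ ↦
          (hsmall j _ (Real.exp_pos _).le).trans (ENNReal.ofReal_le_ofReal hfactor)
    _ = ENNReal.ofReal (Real.exp ((q + 1 : ℕ) * -(2 * m * b * n))) := by
        rw [Finset.prod_const, hcard, ← ENNReal.ofReal_pow (Real.exp_pos _).le, Real.exp_nat_mul]
    _ ≤ ENNReal.ofReal (Real.exp (-(b * n ^ 2))) := by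
        gcongr
        have : (n : ℝ) * (b * n) ≤ 2 * m * (q + 1) * (b * n) := by gcongr
        push_cast
        linarith

end CoefficientTails

section RandomPolynomial

lemma coeff_sum_range_C_mul_X_pow {R : Type*} [Semiring R] (a : ℕ → R) {n i : ℕ} (hi : i ≤ n) :
    (∑ j ∈ Finset.range (n + 1), C (a j) * X ^ j).coeff i = a i := by
  simp [finsetSum_coeff, coeff_C_mul, coeff_X_pow, hi]

lemma natDegree_sum_range_C_mul_X_pow {R : Type*} [Semiring R] (a : ℕ → R) {n : ℕ}
    (hn : a n ≠ 0) : (∑ j ∈ Finset.range (n + 1), C (a j) * X ^ j).natDegree = n := by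
  refine natDegree_eq_of_le_of_coeff_ne_zero (natDegree_sum_le_of_forall_le _ _ fun j hj ↦ ?_) ?_
  · exact (natDegree_C_mul_X_pow_le _ _).trans (Finset.mem_range_succ_iff.1 hj)
  · rwa [coeff_sum_range_C_mul_X_pow a le_rfl]

lemma zeroMeasure_sum_range_compl_closedBall_le_inv {a : ℕ → ℂ} {m n : ℕ} {β δ : ℝ} (hm : 0 < m)
    (hn : 1 ≤ n) (han : a n ≠ 0) (hβδ : 0 ≤ β + δ) (hβ : ∀ j ≤ n, ‖a j‖ ≤ Real.exp (β * n))
    (hδ : ∃ j ≤ n, 2 * m * (n - j) ≤ n ∧ Real.exp (-(δ * n)) < ‖a j‖) :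
    zeroMeasure (∑ j ∈ Finset.range (n + 1), C (a j) * X ^ j)
      (Metric.closedBall 0 ((4 * Real.exp (β + δ)) ^ (2 * m)))ᶜ ≤ (m : ℝ≥0∞)⁻¹ := by
  obtain ⟨j, hjn, hj, hδ⟩ := hδ
  have hdeg := natDegree_sum_range_C_mul_X_pow a han
  refine zeroMeasure_compl_closedBall_le_inv (by omega) hm
    (countP_roots_mul_le_natDegree (j := j) hβδ (fun i hi ↦ ?_) ?_ ?_)
  · rw [hdeg] at hi ⊢
    rw [coeff_sum_range_C_mul_X_pow a hi]
    exact hβ i hi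
  · rwa [hdeg]
  · rwa [hdeg, coeff_sum_range_C_mul_X_pow a hjn]

lemma exists_measure_lt_zeroMeasure_compl_closedBall_le {Ω : Type*} [MeasurableSpace Ω]
    {P : Measure Ω} {ξ : ℕ → Ω → ℂ} {A : ℝ≥0} {c : ℝ} (hindep : iIndepFun ξ P) (hc : 0 < c)
    (hsmall : ∀ j x, 0 ≤ x → P {ω | ‖ξ j ω‖ ≤ x} ≤ ENNReal.ofReal (A * x))
    (htail : ∀ j x, 0 ≤ x → P {ω | x < ‖ξ j ω‖} ≤ ENNReal.ofReal (A * Real.exp (-(c * x))))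
    {ε : ℝ≥0∞} (hε : ε ≠ 0) {b : ℝ} (hb : 0 ≤ b) :
    ∃ R : ℝ, ∀ n : ℕ, 1 ≤ n →
      P {ω | ε < zeroMeasure (∑ j ∈ Finset.range (n + 1), C (ξ j ω) * X ^ j)
        (Metric.closedBall 0 R)ᶜ} ≤ ENNReal.ofReal (Real.exp (-(b * n ^ 2))) := by
  obtain ⟨m, hm⟩ := ENNReal.exists_inv_nat_lt hε
  have hm0 : 0 < m := Nat.pos_of_ne_zero (by rintro rfl; simp at hm)
  obtain ⟨β, hβ0, hβ⟩ := exists_measure_exists_exp_lt_norm_le hc htail (by linarith : 0 ≤ b + 1)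
  obtain ⟨δ, hδ0, hδ⟩ :=
    exists_measure_forall_norm_le_exp_neg_le hindep hsmall hm0 (by linarith : 0 ≤ b + 1)
  refine ⟨(4 * Real.exp (β + δ)) ^ (2 * m), fun n hn ↦ ?_⟩
  have hzero : P {ω | ‖ξ n ω‖ ≤ 0} = 0 := by simpa using hsmall n 0 le_rfl
  have htwo : 2 ≤ Real.exp (n ^ 2) := by
    have hn' : (1 : ℝ) ≤ n := by exact_mod_cast hn
    nlinarith [Real.add_one_le_exp ((n : ℝ) ^ 2)]
  calc P {ω | ε < zeroMeasure (∑ j ∈ Finset.range (n + 1), C (ξ j ω) * X ^ j)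
        (Metric.closedBall 0 ((4 * Real.exp (β + δ)) ^ (2 * m)))ᶜ}
      ≤ P ({ω | ‖ξ n ω‖ ≤ 0} ∪ ({ω | ∃ j ≤ n, Real.exp (β * n) < ‖ξ j ω‖} ∪
          {ω | ∀ j ≤ n, 2 * m * (n - j) ≤ n → ‖ξ j ω‖ ≤ Real.exp (-(δ * n))})) := by
        refine measure_mono fun ω hω ↦ ?_
        contrapose! hω
        simp only [Set.mem_union, Set.mem_ofPred_eq, norm_le_zero_iff, not_or, not_exists, not_and,
          not_lt, not_forall, not_le, exists_prop] at hω ⊢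
        exact (zeroMeasure_sum_range_compl_closedBall_le_inv hm0 hn hω.1 (add_nonneg hβ0 hδ0)
          hω.2.1 hω.2.2).trans hm.le
    _ ≤ 0 + (ENNReal.ofReal (Real.exp (-((b + 1) * n ^ 2))) +
          ENNReal.ofReal (Real.exp (-((b + 1) * n ^ 2)))) := by
        grw [measure_union_le, measure_union_le, hzero, hβ n hn, hδ n hn]
    _ = ENNReal.ofReal (2 * Real.exp (-((b + 1) * n ^ 2))) := by
        rw [zero_add, ← ENNReal.ofReal_add (Real.exp_pos _).le (Real.exp_pos _).le, two_mul]
    _ ≤ ENNReal.ofReal (Real.exp (n ^ 2) * Real.exp (-((b + 1) * n ^ 2))) := by gcongr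
    _ = ENNReal.ofReal (Real.exp (-(b * n ^ 2))) := by
        rw [← Real.exp_add]
        ring_nf

end RandomPolynomial

section ExponentialTightness

lemma tsum_ofReal_exp_neg_add_mul_le {a : ℝ} (ha : 1 ≤ a) (T : ℝ) :
    ∑' m : ℕ, ENNReal.ofReal (Real.exp (-((T + (m + 1)) * a))) ≤
      ENNReal.ofReal (Real.exp (-(T * a))) := by
  have hhalf : ENNReal.ofReal (Real.exp (-a)) ≤ 2⁻¹ := by
    rw [← ENNReal.ofReal_ofNat, ← ENNReal.ofReal_inv_of_pos two_pos, Real.exp_neg]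
    gcongr
    linarith [Real.add_one_le_exp a]
  calc ∑' m : ℕ, ENNReal.ofReal (Real.exp (-((T + (m + 1)) * a)))
      = ∑' m : ℕ, ENNReal.ofReal (Real.exp (-(T * a))) *
          ENNReal.ofReal (Real.exp (-a)) ^ (m + 1) := by
        refine tsum_congr fun m ↦ ?_
        rw [← ENNReal.ofReal_pow (Real.exp_pos _).le, ← ENNReal.ofReal_mul (Real.exp_pos _).le,
          ← Real.exp_nat_mul, ← Real.exp_add]
        push_cast
        ring_nf
    _ ≤ ∑' m : ℕ, ENNReal.ofReal (Real.exp (-(T * a))) * 2⁻¹ ^ (m + 1) := by gcongr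
    _ = ENNReal.ofReal (Real.exp (-(T * a))) := by
        rw [ENNReal.tsum_mul_left, ENNReal.tsum_geometric_add_one]
        simp [ENNReal.inv_mul_cancel]

theorem exists_isCompact_forall_measure_notMem_le {Ω ι E : Type*} [MeasurableSpace Ω]
    {P : Measure Ω} [TopologicalSpace E] [T2Space E] [NormalSpace E] [MeasurableSpace E]
    [BorelSpace E] {s : Set ι} {μ : ι → Ω → ProbabilityMeasure E} {a : ι → ℝ}
    (ha : ∀ i ∈ s, 1 ≤ a i)
    (h : ∀ ε : ℝ≥0, ε ≠ 0 → ∀ b : ℝ, 0 ≤ b → ∃ K : Set E, IsCompact K ∧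
      ∀ i ∈ s, P {ω | ε < μ i ω Kᶜ} ≤ ENNReal.ofReal (Real.exp (-(b * a i))))
    {T : ℝ} (hT : 0 ≤ T) :
    ∃ K : Set (ProbabilityMeasure E), IsCompact K ∧
      ∀ i ∈ s, P {ω | μ i ω ∉ K} ≤ ENNReal.ofReal (Real.exp (-(T * a i))) := by
  set u : ℕ → ℝ≥0 := fun m ↦ 1 / (m + 1)
  have hu0 (m : ℕ) : u m ≠ 0 := by positivity
  choose K hK hKμ using fun m : ℕ ↦ h (u m) (hu0 m) (T + (m + 1)) (by positivity)
  refine ⟨{ν | ∀ m, ν (K m)ᶜ ≤ u m},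
    isCompact_setOfPred_probabilityMeasure_mass_eq_compl_isCompact_le
      tendsto_one_div_add_atTop_nhds_zero_nat hK (Or.inl inferInstance), fun i hi ↦ ?_⟩
  calc P {ω | μ i ω ∉ {ν : ProbabilityMeasure E | ∀ m, ν (K m)ᶜ ≤ u m}}
      = P (⋃ m, {ω | u m < μ i ω (K m)ᶜ}) := by
        congr 1
        ext ω
        simp
    _ ≤ ∑' m, P {ω | u m < μ i ω (K m)ᶜ} := measure_iUnion_le _
    _ ≤ ∑' m : ℕ, ENNReal.ofReal (Real.exp (-((T + (m + 1)) * a i))) :=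
        ENNReal.tsum_le_tsum fun m ↦ hKμ m i hi
    _ ≤ ENNReal.ofReal (Real.exp (-(T * a i))) := tsum_ofReal_exp_neg_add_mul_le (ha i hi) T

lemma limsup_inv_mul_log_le {ι : Type*} {l : Filter ι} {a : ι → ℝ} {f : ι → ℝ≥0∞} {T : ℝ}
    (ha : ∀ᶠ i in l, 0 < a i) (hf : ∀ᶠ i in l, f i ≤ ENNReal.ofReal (Real.exp (-(T * a i)))) :
    l.limsup (fun i ↦ (((a i)⁻¹ : ℝ) : EReal) * ENNReal.log (f i)) ≤ (-T : EReal) := by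
  refine limsup_le_of_le (by isBoundedDefault) ?_
  filter_upwards [ha, hf] with i hai hfi
  calc (((a i)⁻¹ : ℝ) : EReal) * ENNReal.log (f i)
      ≤ (((a i)⁻¹ : ℝ) : EReal) * ENNReal.log (ENNReal.ofReal (Real.exp (-(T * a i)))) :=
        mul_le_mul_of_nonneg_left (ENNReal.log_monotone hfi)
          (EReal.coe_nonneg.2 (inv_nonneg.2 hai.le))
    _ = (-T : EReal) := by
        rw [ENNReal.log_ofReal_of_pos (Real.exp_pos _), Real.log_exp, ← EReal.coe_mul,
          ← EReal.coe_neg]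
        congr 1
        field_simp

theorem exponential_tightness_general
    {Ω : Type*} [MeasurableSpace Ω] (P : Measure Ω) {A : ℝ≥0} {c : ℝ} (hc : 0 < c)
    (ξ : ℕ → Ω → ℂ) (hindep : iIndepFun ξ P)
    (hsmall : ∀ j x, 0 ≤ x → P {ω | ‖ξ j ω‖ ≤ x} ≤ ENNReal.ofReal (A * x))
    (htail : ∀ j x, 0 ≤ x → P {ω | x < ‖ξ j ω‖} ≤ ENNReal.ofReal (A * Real.exp (-(c * x))))
    (Ln : ℕ → Ω → ProbabilityMeasure ℂ)
    (hLn : ∀ n, 1 ≤ n → ∀ᵐ ω ∂P, (Ln n ω : Measure ℂ) =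
      zeroMeasure (∑ j ∈ Finset.range (n + 1), C (ξ j ω) * X ^ j)) :
    ∀ T : ℝ, 0 < T → ∃ K : Set (ProbabilityMeasure ℂ), IsCompact K ∧
      atTop.limsup (fun n : ℕ =>
          ((((n : ℝ) ^ 2)⁻¹ : ℝ) : EReal) * ENNReal.log (P {ω | Ln n ω ∉ K})) ≤
        (-T : EReal) := by
  intro T hT
  obtain ⟨K, hK, hPK⟩ : ∃ K : Set (ProbabilityMeasure ℂ), IsCompact K ∧ ∀ n ∈ Set.Ici 1,
      P {ω | Ln n ω ∉ K} ≤ ENNReal.ofReal (Real.exp (-(T * (n : ℝ) ^ 2))) := by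
    refine exists_isCompact_forall_measure_notMem_le
      (fun n hn ↦ one_le_pow₀ (by exact_mod_cast hn)) (fun ε hε b hb ↦ ?_) hT.le
    obtain ⟨R, hR⟩ := exists_measure_lt_zeroMeasure_compl_closedBall_le hindep hc hsmall htail
      (ENNReal.coe_ne_zero.2 hε) hb
    refine ⟨Metric.closedBall 0 R, isCompact_closedBall 0 R, fun n hn ↦ ?_⟩
    refine (measure_congr (eventuallyEq_set.2 ?_)).trans_le (hR n hn)
    filter_upwards [hLn n hn] with ω hω
    simp only [← hω, ← ProbabilityMeasure.ennreal_coeFn_eq_coeFn_toMeasure,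
      ENNReal.coe_lt_coe]
  refine ⟨K, hK, limsup_inv_mul_log_le ?_ ?_⟩
  · filter_upwards [eventually_ge_atTop 1] with n hn
    positivity
  · filter_upwards [eventually_ge_atTop 1] with n hn using hPK n hn

end ExponentialTightness

section ExponentialLaw

lemma expMeasure_Iic_le {r : ℝ} (hr : 0 < r) {x : ℝ} (hx : 0 ≤ x) :
    expMeasure r (Set.Iic x) ≤ ENNReal.ofReal (r * x) := by
  have := isProbabilityMeasure_expMeasure hr
  rw [← ofReal_cdf, cdf_expMeasure_eq hr, if_pos hx]
  gcongr
  linarith [Real.add_one_le_exp (-(r * x))]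

lemma expMeasure_Ioi {r : ℝ} (hr : 0 < r) {x : ℝ} (hx : 0 ≤ x) :
    expMeasure r (Set.Ioi x) = ENNReal.ofReal (Real.exp (-(r * x))) := by
  have := isProbabilityMeasure_expMeasure hr
  have hexp : Real.exp (-(r * x)) ≤ 1 := Real.exp_le_one_iff.2 (neg_nonpos.2 (mul_nonneg hr.le hx))
  rw [← Set.compl_Iic, prob_compl_eq_one_sub measurableSet_Iic, ← ofReal_cdf,
    cdf_expMeasure_eq hr, if_pos hx, ← ENNReal.ofReal_one,
    ← ENNReal.ofReal_sub _ (sub_nonneg.2 hexp), sub_sub_cancel]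

variable {Ω : Type*} [MeasurableSpace Ω] {P : Measure Ω} {Y : Ω → ℝ} {r : ℝ}

lemma ae_pos_of_hasLaw_expMeasure (hr : 0 < r) (hY : HasLaw Y (expMeasure r) P) :
    ∀ᵐ ω ∂P, 0 < Y ω := by
  have hnull : P {ω | Y ω ≤ 0} = 0 := by
    rw [show P {ω | Y ω ≤ 0} = expMeasure r (Set.Iic 0) from hY.measure_eq measurableSet_Iic]
    simpa using expMeasure_Iic_le hr le_rfl
  simpa [ae_iff] using hnull

lemma measure_norm_le_of_hasLaw_expMeasure (hr : 0 < r) (hY : HasLaw Y (expMeasure r) P) {x : ℝ}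
    (hx : 0 ≤ x) : P {ω | ‖Y ω‖ ≤ x} ≤ ENNReal.ofReal (r * x) :=
  calc P {ω | ‖Y ω‖ ≤ x} ≤ P {ω | Y ω ≤ x} :=
        measure_mono fun ω (hω : |Y ω| ≤ x) ↦ (le_abs_self (Y ω)).trans hω
    _ = expMeasure r (Set.Iic x) := hY.measure_eq measurableSet_Iic
    _ ≤ ENNReal.ofReal (r * x) := expMeasure_Iic_le hr hx

lemma measure_lt_norm_of_hasLaw_expMeasure (hr : 0 < r) (hY : HasLaw Y (expMeasure r) P) {x : ℝ}
    (hx : 0 ≤ x) : P {ω | x < ‖Y ω‖} = ENNReal.ofReal (Real.exp (-(r * x))) :=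
  calc P {ω | x < ‖Y ω‖} = P {ω | x < Y ω} := by
        refine measure_congr (eventuallyEq_set.2 ?_)
        filter_upwards [ae_pos_of_hasLaw_expMeasure hr hY] with ω hω
        simp [abs_of_pos hω]
    _ = expMeasure r (Set.Ioi x) := hY.measure_eq measurableSet_Ioi
    _ = ENNReal.ofReal (Real.exp (-(r * x))) := expMeasure_Ioi hr hx

end ExponentialLaw

/-- Exponential tightness of the laws of the empirical measures `L_n`: for every
`T > 0` there is a compact set `K_T ⊆ M₁(ℂ)` with
`limsup (1/n²) log P(L_n ∉ K_T) ≤ -T`. -/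
theorem exponential_tightness
    {Ω : Type*} [MeasurableSpace Ω] (P : Measure Ω) [IsProbabilityMeasure P]
    (ξ : ℕ → Ω → ℝ) (hmeas : ∀ j, Measurable (ξ j))
    (hindep : iIndepFun ξ P)
    (hdist : ∀ j, Measure.map (ξ j) P = ProbabilityTheory.expMeasure 1)
    (Ln : ℕ → Ω → ProbabilityMeasure ℂ)
    (hLn : ∀ n, 1 ≤ n → ∀ ω, (∀ j, 0 < ξ j ω) →
      (Ln n ω : Measure ℂ) = zeroMeasure (randPoly ξ n ω)) :
    ∀ T : ℝ, 0 < T → ∃ K : Set (ProbabilityMeasure ℂ), IsCompact K ∧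
      atTop.limsup (fun n : ℕ =>
          ((((n : ℝ) ^ 2)⁻¹ : ℝ) : EReal) * ENNReal.log (P {ω | Ln n ω ∉ K})) ≤
        (-T : EReal) := by
  have hlaw (j : ℕ) : HasLaw (ξ j) (expMeasure 1) P := ⟨(hmeas j).aemeasurable, hdist j⟩
  refine exponential_tightness_general (A := 1) (c := 1) P one_pos (fun j ω ↦ (ξ j ω : ℂ))
    (hindep.comp _ fun _ ↦ Complex.measurable_ofReal) (fun j x hx ↦ ?_) (fun j x hx ↦ ?_) Ln
    fun n hn ↦ ?_
  · simpa using measure_norm_le_of_hasLaw_expMeasure one_pos (hlaw j) hx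
  · simpa using (measure_lt_norm_of_hasLaw_expMeasure one_pos (hlaw j) hx).le
  · filter_upwards [ae_all_iff.2 fun j ↦ ae_pos_of_hasLaw_expMeasure one_pos (hlaw j)] with ω hω
    exact hLn n hn ω hω
end

section
/- Deterministic bound on logarithmic mass near 1: there is a universal constant c > 0 such that for every polynomial p of degree n ≥ 1 all of whose coefficients are real and strictly positive, with zeros z_1,…,z_n counted with multiplicity, one has (1/n) Σ_{i : |1−z_i| < 1} |log|1−z_i|| ≤ c. -/
open MeasureTheory ProbabilityTheory Filter Polynomial
open scoped ENNReal NNReal Classical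

/-!
Let `p` have degree `n` and nonnegative coefficients and let `q(X) = p(X + 1)`, whose roots are
`z - 1` for `z` a root of `p` and whose constant coefficient is `p(1)`. By Jensen's formula the
logarithmic mass of the roots of `q` in the unit disc is `log M(q) - log |q(0)|`, where `M` denotes
the Mahler measure. Since `q` too has nonnegative coefficients, `M(q) ≤ q(1) = p(2) ≤ 2 ^ n * p(1)`,
so the mass is at most `n log 2`.
-/

open scoped ComplexOrder Real

section OrderedSemiring

variable {R : Type*} [Semiring R] [PartialOrder R] {p : R[X]} {r : R}

theorem eval_nonneg_of_coeff_nonneg [IsOrderedRing R] (hp : ∀ i, 0 ≤ p.coeff i) (hr : 0 ≤ r) :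
    0 ≤ p.eval r := by
  rw [eval_eq_sum_range]
  exact Finset.sum_nonneg fun i _ ↦ mul_nonneg (hp i) (pow_nonneg hr i)

theorem coeff_taylor_nonneg [IsOrderedRing R] (hp : ∀ i, 0 ≤ p.coeff i) (hr : 0 ≤ r) (i : ℕ) :
    0 ≤ (taylor r p).coeff i := by
  rw [taylor_coeff]
  refine eval_nonneg_of_coeff_nonneg (fun j ↦ ?_) hr
  rw [hasseDeriv_coeff]
  exact mul_nonneg (Nat.cast_nonneg _) (hp _)

theorem eval_pos_of_coeff_nonneg [IsStrictOrderedRing R] (hp : ∀ i, 0 ≤ p.coeff i) (hp₀ : p ≠ 0)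
    (hr : 0 < r) : 0 < p.eval r := by
  rw [eval_eq_sum_range]
  refine Finset.sum_pos' (fun i _ ↦ mul_nonneg (hp i) (pow_nonneg hr.le i))
    ⟨p.natDegree, Finset.self_mem_range_succ _, mul_pos ?_ (pow_pos hr _)⟩
  exact (hp _).lt_of_ne' (leadingCoeff_ne_zero.mpr hp₀)

end OrderedSemiring

theorem eval_mul_le_pow_natDegree_mul_eval {R : Type*} [CommSemiring R] [PartialOrder R]
    [IsOrderedRing R] {p : R[X]} {r c : R} (hp : ∀ i, 0 ≤ p.coeff i) (hr : 0 ≤ r) (hc : 1 ≤ c) :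
    p.eval (c * r) ≤ c ^ p.natDegree * p.eval r := by
  rw [eval_eq_sum_range, eval_eq_sum_range, Finset.mul_sum]
  refine Finset.sum_le_sum fun i hi ↦ ?_
  have hci : c ^ i ≤ c ^ p.natDegree := pow_le_pow_right₀ hc (Finset.mem_range_succ_iff.mp hi)
  calc
    p.coeff i * (c * r) ^ i = c ^ i * (p.coeff i * r ^ i) := by ring
    _ ≤ c ^ p.natDegree * (p.coeff i * r ^ i) :=
      mul_le_mul_of_nonneg_right hci (mul_nonneg (hp i) (pow_nonneg hr i))

theorem roots_taylor {R : Type*} [CommRing R] [IsDomain R] (r : R) (p : R[X]) :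
    (taylor r p).roots = p.roots.map (· - r) := by
  simpa [taylor_apply] using roots_comp_C_mul_X_add_C p 1 r isUnit_one

theorem posLog_inv_eq_ite {x : ℝ} (hx : 0 ≤ x) :
    log⁺ x⁻¹ = if x < 1 then |Real.log x| else 0 := by
  rw [Real.posLog_apply, Real.log_inv]
  split_ifs with h
  · have hlog := Real.log_nonpos hx h.le
    rw [abs_of_nonpos hlog, max_eq_right (neg_nonneg.mpr hlog)]
  · exact max_eq_left (neg_nonpos.mpr (Real.log_nonneg (not_lt.mp h)))

theorem sum_map_filter {α M : Type*} [AddCommMonoid M] (s : Multiset α) (P : α → Prop)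
    [DecidablePred P] (f : α → M) :
    ((s.filter P).map f).sum = (s.map fun a ↦ if P a then f a else 0).sum := by
  induction s using Multiset.induction_on with
  | empty => simp
  | cons a s ih => by_cases ha : P a <;> simp [ha, ih]

theorem sum_posLog_inv_norm_roots {q : ℂ[X]} (hq : q.coeff 0 ≠ 0) :
    (q.roots.map fun w ↦ log⁺ ‖w‖⁻¹).sum =
      q.logMahlerMeasure - Real.log ‖q.coeff 0‖ := by
  have hprod : ‖q.coeff 0‖ = ‖q.leadingCoeff‖ * (q.roots.map (‖·‖)).prod := by
    rw [(IsAlgClosed.splits q).coeff_zero_eq_leadingCoeff_mul_prod_roots,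
      norm_mul, norm_mul, norm_pow, norm_neg, norm_one, one_pow, one_mul]
    exact congrArg _ (map_multiset_prod (normHom : ℂ →*₀ ℝ) q.roots)
  have hne : ‖q.leadingCoeff‖ ≠ 0 ∧ (q.roots.map (‖·‖)).prod ≠ 0 :=
    mul_ne_zero_iff.mp (hprod ▸ norm_ne_zero_iff.mpr hq)
  have hlog : Real.log ‖q.coeff 0‖ =
      Real.log ‖q.leadingCoeff‖ + (q.roots.map fun w ↦ Real.log ‖w‖).sum := by
    rw [hprod, Real.log_mul hne.1 hne.2, Real.log_multiset_prod, Multiset.map_map]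
    · rfl
    · exact fun x hx h ↦ hne.2 (Multiset.prod_eq_zero (h ▸ hx))
  rw [hlog, logMahlerMeasure_eq_log_leadingCoeff_add_sum_log_roots, add_sub_add_left_eq_sub,
    ← Multiset.sum_map_sub]
  simp_rw [← Real.posLog_sub_posLog_inv, sub_sub_cancel]

theorem mahlerMeasure_le_norm_eval_one {q : ℂ[X]} (hq : ∀ i, 0 ≤ q.coeff i) :
    q.mahlerMeasure ≤ ‖q.eval 1‖ := by
  have hsum : ((q.sum fun _ a ↦ ‖a‖ : ℝ) : ℂ) = q.eval 1 := by
    simp [Polynomial.sum_def, eval_eq_sum, Complex.norm_of_nonneg' (hq _)]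
  calc
    q.mahlerMeasure ≤ q.sum fun _ a ↦ ‖a‖ := mahlerMeasure_le_sum_norm_coeff q
    _ ≤ ‖q.eval 1‖ := by
      rw [← hsum, Complex.norm_real]
      exact Real.le_norm_self _

theorem mahlerMeasure_taylor_le {p : ℂ[X]} (hp : ∀ i, 0 ≤ p.coeff i) {r : ℂ} (hr : 0 < r) :
    (taylor r p).mahlerMeasure ≤ ‖1 + r⁻¹‖ ^ p.natDegree * ‖p.eval r‖ := by
  have hone : 1 ≤ 1 + r⁻¹ := le_add_of_nonneg_right (inv_nonneg.mpr hr.le)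
  have hshift : 1 + r = (1 + r⁻¹) * r := by
    rw [add_mul, one_mul, inv_mul_cancel₀ hr.ne', add_comm]
  calc
    (taylor r p).mahlerMeasure ≤ ‖(taylor r p).eval 1‖ :=
      mahlerMeasure_le_norm_eval_one (coeff_taylor_nonneg hp hr.le)
    _ = ‖p.eval ((1 + r⁻¹) * r)‖ := by rw [taylor_eval, hshift]
    _ ≤ ‖(1 + r⁻¹) ^ p.natDegree * p.eval r‖ :=
      CStarAlgebra.norm_le_norm_of_nonneg_of_le
        (eval_nonneg_of_coeff_nonneg hp (mul_nonneg (zero_le_one.trans hone) hr.le))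
        (eval_mul_le_pow_natDegree_mul_eval hp hr.le hone)
    _ = ‖1 + r⁻¹‖ ^ p.natDegree * ‖p.eval r‖ := by rw [norm_mul, norm_pow]

theorem sum_posLog_inv_norm_sub_roots_le {p : ℂ[X]} (hp : ∀ i, 0 ≤ p.coeff i) (hp₀ : p ≠ 0)
    {r : ℂ} (hr : 0 < r) :
    (p.roots.map fun z ↦ log⁺ ‖r - z‖⁻¹).sum ≤
      p.natDegree * Real.log ‖1 + r⁻¹‖ := by
  have heval : p.eval r ≠ 0 := (eval_pos_of_coeff_nonneg hp hp₀ hr).ne'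
  have hone : 1 + r⁻¹ ≠ 0 := (add_pos one_pos (inv_pos.mpr hr)).ne'
  have hjensen : (p.roots.map fun z ↦ log⁺ ‖r - z‖⁻¹).sum =
      Real.log (taylor r p).mahlerMeasure - Real.log ‖p.eval r‖ := by
    have hsum := sum_posLog_inv_norm_roots (q := taylor r p) (by rwa [taylor_coeff_zero])
    simpa [roots_taylor, norm_sub_rev, logMahlerMeasure_eq_log_MahlerMeasure] using hsum
  rw [hjensen, sub_le_iff_le_add, ← Real.log_pow,
    ← Real.log_mul (pow_ne_zero _ (norm_ne_zero_iff.mpr hone)) (norm_ne_zero_iff.mpr heval)]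
  exact Real.log_le_log (mahlerMeasure_pos_of_ne_zero ((taylor_eq_zero r p).not.mpr hp₀))
    (mahlerMeasure_taylor_le hp hr)

theorem polPos.coeff_nonneg {p : ℂ[X]} (hp : polPos p) (i : ℕ) : 0 ≤ p.coeff i := by
  rcases le_or_gt i p.natDegree with hi | hi
  · obtain ⟨him, hre⟩ := hp.2 i hi
    exact Complex.nonneg_iff.mpr ⟨hre.le, him.symm⟩
  · exact (coeff_eq_zero_of_natDegree_lt hi).ge

theorem log_mass_near_one_bound_general {p : ℂ[X]} (hdeg : 0 < p.natDegree)
    (hp : ∀ i, 0 ≤ p.coeff i) :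
    (p.natDegree : ℝ)⁻¹ *
        ((p.roots.filter fun z ↦ ‖1 - z‖ < 1).map fun z ↦ |Real.log ‖1 - z‖|).sum ≤
      Real.log 2 := by
  rw [inv_mul_le_iff₀ (Nat.cast_pos.mpr hdeg), sum_map_filter]
  simp_rw [← posLog_inv_eq_ite (norm_nonneg _)]
  simpa [one_add_one_eq_two] using
    sum_posLog_inv_norm_sub_roots_le hp (ne_zero_of_natDegree_gt hdeg) one_pos

/-- Deterministic bound on logarithmic mass near `1`: there is a universal constant
`c > 0` such that for every polynomial `p` of degree `n ≥ 1` with real, strictly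
positive coefficients, with zeros counted with multiplicity,
`(1/n) ∑_{i : |1-z_i| < 1} |log|1-z_i|| ≤ c`. -/
theorem log_mass_near_one_bound :
    ∃ c : ℝ, 0 < c ∧ ∀ p : Polynomial ℂ, polPos p →
      ((p.natDegree : ℝ))⁻¹ *
          (((p.roots.filter (fun z => ‖1 - z‖ < 1)).map
              (fun z => |Real.log ‖1 - z‖|)).sum) ≤ c :=
  ⟨Real.log 2, Real.log_pos one_lt_two,
    fun _ hp ↦ log_mass_near_one_bound_general hp.1 hp.coeff_nonneg⟩
end
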